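/- arXiv:2004.07550 — 2 statements merged into one kernel-verified Lean document; each statement's English description precedes it below -/
import Mathlib

section
/- Let (X,κ) and (Y,λ) be finite digital images, let f : X → X be a continuous self-map, and let g : X → Y be a strong homotopy equivalence with strong homotopy inverse h : Y → X (i.e., g, h are continuous with h ∘ g ≃* id_X and g ∘ h ≃* id_Y). Then L(f) = L(g ∘ f ∘ h). -/
/-- A function `f : (X,κ) → (Y,λ)` between digital images is (digitally) continuous if
whenever `x, y` are `κ`-adjacent, `f x = f y` or `f x, f y` are `λ`-adjacent. -/
def DigCont {X Y : Type*} (κ : X → X → Prop) (lam : Y → Y → Prop) (f : X → Y) : Prop :=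
  ∀ x y, κ x y → f x = f y ∨ lam (f x) (f y)

/-- A clique of `(X,κ)`: a nonempty set of mutually `κ`-adjacent points. -/
def IsClique {X : Type*} (κ : X → X → Prop) (S : Finset X) : Prop :=
  S.Nonempty ∧ ∀ x ∈ S, ∀ y ∈ S, x ≠ y → κ x y

/-- `x` is an approximate fixed point of `f`: `f x = x` or `f x` is adjacent to `x`. -/
def ApproxFix {X : Type*} (κ : X → X → Prop) (f : X → X) (x : X) : Prop :=
  f x = x ∨ κ x (f x)

/-- A strong homotopy between `f, g : (X,κ) → (Y,λ)` is `H : X × {0,…,m} → Y` with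
`H(x,0) = f(x)`, `H(x,m) = g(x)`, such that whenever (`x = x′` or `x,x′` are `κ`-adjacent)
and `|t − t′| ≤ 1`, with `(x,t) ≠ (x′,t′)`, the values `H(x,t), H(x′,t′)` are equal or
`λ`-adjacent.  `f ≃* g` iff such an `H` exists. -/
def StrongHomotopic {X Y : Type*} (κ : X → X → Prop) (lam : Y → Y → Prop)
    (f g : X → Y) : Prop :=
  ∃ (m : ℕ) (H : X → ℕ → Y),
    (∀ x, H x 0 = f x) ∧ (∀ x, H x m = g x) ∧
    ∀ x x' (t t' : ℕ), t ≤ m → t' ≤ m → (x = x' ∨ κ x x') →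
      (t = t' ∨ t + 1 = t' ∨ t' + 1 = t) → (x ≠ x' ∨ t ≠ t') →
      (H x t = H x' t' ∨ lam (H x t) (H x' t'))

/-- The permutation induced by `f` on a finite set `S` with `f(S) = S`. -/
noncomputable def fixedSetPerm {X : Type*} [DecidableEq X] (f : X → X) (S : Finset X)
    (h : S.image f = S) : Equiv.Perm {x // x ∈ S} :=
  Equiv.ofBijective
    (fun x => ⟨f x.1, by
      have hx : f x.1 ∈ S.image f := Finset.mem_image_of_mem f x.2
      rwa [h] at hx⟩)
    (by
      rw [Fintype.bijective_iff_surjective_and_card]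
      refine ⟨fun y => ?_, rfl⟩
      have hy : (y : X) ∈ S.image f := by rw [h]; exact y.2
      obtain ⟨x, hx, hfx⟩ := Finset.mem_image.mp hy
      exact ⟨⟨x, hx⟩, Subtype.ext hfx⟩)

open Classical in
/-- The simplicial Lefschetz number `L(f) = ∑_S (−1)^{|S|−1} sgn(f|_S)`, summing over all
cliques `S` of `(X,κ)` with `f(S) = S`. -/
noncomputable def simpLef {X : Type*} [Fintype X] [DecidableEq X]
    (κ : X → X → Prop) (f : X → X) : ℤ :=
  ∑ S : Finset X,
    if h : IsClique κ S ∧ S.image f = S then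
      (-1 : ℤ) ^ (S.card - 1) * ((Equiv.Perm.sign (fixedSetPerm f S h.2) : ℤˣ) : ℤ)
    else 0

open Classical in
/-- The simplicial Euler characteristic `χ(X) = ∑_{q≥0} (−1)^q s_q`, where `s_q` is the
number of cliques of `X` with exactly `q+1` points; equivalently `∑_S (−1)^{|S|−1}` over
all cliques `S`. -/
noncomputable def simpEuler {X : Type*} [Fintype X] (κ : X → X → Prop) : ℤ :=
  ∑ S : Finset X, if IsClique κ S then (-1 : ℤ) ^ (S.card - 1) else 0

set_option linter.all false
set_option linter.deprecated false

open Classical in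
noncomputable def wt {X : Type*} [DecidableEq X] (f : X → X) (S : Finset X) : ℤ :=
  if h : S.image f = S then
    (-1 : ℤ) ^ S.card * ((Equiv.Perm.sign (fixedSetPerm f S h) : ℤˣ) : ℤ) else 0

def EE {X : Type*} (κ : X → X → Prop) (u v : X) : Prop := u = v ∨ κ u v

theorem EE.symm' {X : Type*} {κ : X → X → Prop} (hs : Symmetric κ) {u v : X}
    (h : EE κ u v) : EE κ v u := h.elim (fun h => Or.inl h.symm) (fun h => Or.inr (hs h))

theorem isClique_iff {X : Type*} {κ : X → X → Prop} {S : Finset X} :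
    IsClique κ S ↔ S.Nonempty ∧ ∀ x ∈ S, ∀ y ∈ S, EE κ x y := by
  unfold IsClique EE
  refine and_congr_right fun _ => forall₄_congr fun x _ y _ => ?_
  tauto

theorem fixedSetPerm_apply {X : Type*} [DecidableEq X] (f : X → X) (S : Finset X)
    (h : S.image f = S) (x : {x // x ∈ S}) : (fixedSetPerm f S h x : X) = f x := rfl

open Classical in
theorem simpLef_eq {X : Type*} [Fintype X] [DecidableEq X] (κ : X → X → Prop) (f : X → X) :
    simpLef κ f = - ∑ S : Finset X with IsClique κ S, wt f S := by
  unfold simpLef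
  rw [Finset.sum_filter, ← Finset.sum_neg_distrib]
  refine Finset.sum_congr rfl fun S _ => ?_
  by_cases h1 : IsClique κ S
  · by_cases h2 : S.image f = S
    · rw [dif_pos ⟨h1, h2⟩, if_pos h1, wt, dif_pos h2]
      have : S.card - 1 + 1 = S.card := Nat.sub_add_cancel h1.1.card_pos
      rw [← this, pow_succ]; simp
    · rw [dif_neg (fun h => h2 h.2), if_pos h1, wt, dif_neg h2]; simp
  · rw [dif_neg (fun h => h1 h.1), if_neg h1]; simp

theorem wt_congr {X : Type*} [DecidableEq X] {f g : X → X} {S : Finset X}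
    (h : ∀ x ∈ S, f x = g x) : wt f S = wt g S := by
  have hi : S.image f = S.image g := Finset.image_congr (fun x hx => h x hx)
  unfold wt
  by_cases h2 : S.image f = S
  · rw [dif_pos h2, dif_pos (hi ▸ h2)]
    have : fixedSetPerm f S h2 = fixedSetPerm g S (hi ▸ h2) := by
      ext x
      exact h x x.2
    rw [this]
  · rw [dif_neg h2, dif_neg (hi ▸ h2)]

theorem wt_union {X : Type*} [Fintype X] [DecidableEq X] {f : X → X} {S Z : Finset X}
    (hS : S.image f = S) (hZ : Z.image f = Z) (hd : Disjoint S Z) :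
    wt f (S ∪ Z) = wt f S * wt f Z := by
  have hU : (S ∪ Z).image f = S ∪ Z := by rw [Finset.image_union, hS, hZ]
  unfold wt
  rw [dif_pos hS, dif_pos hZ, dif_pos hU]
  have key : Equiv.Perm.ofSubtype (fixedSetPerm f (S ∪ Z) hU) =
      Equiv.Perm.ofSubtype (fixedSetPerm f S hS) * Equiv.Perm.ofSubtype (fixedSetPerm f Z hZ) := by
    ext x
    rw [Equiv.Perm.mul_apply]
    by_cases hx : x ∈ Z
    · have hfx : f x ∈ Z := hZ ▸ Finset.mem_image_of_mem f hx
      rw [Equiv.Perm.ofSubtype_apply_of_mem (p := (· ∈ Z)) _ hx,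
        Equiv.Perm.ofSubtype_apply_of_mem (p := (· ∈ S ∪ Z)) _ (Finset.mem_union_right _ hx),
        fixedSetPerm_apply, fixedSetPerm_apply,
        Equiv.Perm.ofSubtype_apply_of_not_mem (p := (· ∈ S)) _
          (Finset.disjoint_right.1 hd hfx)]
    · rw [Equiv.Perm.ofSubtype_apply_of_not_mem (p := (· ∈ Z)) _ hx]
      by_cases hx' : x ∈ S
      · rw [Equiv.Perm.ofSubtype_apply_of_mem (p := (· ∈ S)) _ hx',
          Equiv.Perm.ofSubtype_apply_of_mem (p := (· ∈ S ∪ Z)) _ (Finset.mem_union_left _ hx')]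
        rfl
      · rw [Equiv.Perm.ofSubtype_apply_of_not_mem (p := (· ∈ S)) _ hx',
          Equiv.Perm.ofSubtype_apply_of_not_mem (p := (· ∈ S ∪ Z)) _ (by simp [hx, hx'])]
  have := congrArg Equiv.Perm.sign key
  rw [Equiv.Perm.sign_mul, Equiv.Perm.sign_ofSubtype, Equiv.Perm.sign_ofSubtype,
    Equiv.Perm.sign_ofSubtype] at this
  rw [this, Finset.card_union_of_disjoint hd, pow_add]
  push_cast
  ring

theorem wt_cycle {X : Type*} [DecidableEq X] {f : X → X} {Z : Finset X}
    (hZ : Z.image f = Z) (z : X) (hz : z ∈ Z) (hc : ∀ y ∈ Z, ∃ n, f^[n] z = y) :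
    wt f Z = -1 := by
  unfold wt
  rw [dif_pos hZ]
  set σ := fixedSetPerm f Z hZ with hσ
  have hp : ∀ (n : ℕ) (x : {x // x ∈ Z}), ((σ ^ n) x : X) = f^[n] x := by
    intro n
    induction n with
    | zero => intro x; rfl
    | succ n ih =>
      intro x
      rw [pow_succ', Equiv.Perm.mul_apply, Function.iterate_succ_apply', ← ih]
      rfl
  have hc' : ∀ y : {x // x ∈ Z}, ∃ n : ℕ, (σ ^ n) ⟨z, hz⟩ = y := by
    intro y
    obtain ⟨n, hn⟩ := hc y y.2
    exact ⟨n, Subtype.ext (by rw [hp, hn])⟩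
  by_cases h1 : σ ⟨z, hz⟩ = ⟨z, hz⟩
  · have hall : ∀ y : {x // x ∈ Z}, y = ⟨z, hz⟩ := by
      intro y
      obtain ⟨n, hn⟩ := hc' y
      rw [← hn]
      clear hn
      induction n with
      | zero => rfl
      | succ n ih => rw [pow_succ, Equiv.Perm.mul_apply, h1, ih]
    have hs1 : σ = 1 := by ext y; rw [hall (σ y), hall y]; rfl
    have hZ1 : Z = {z} := by
      ext y
      simp only [Finset.mem_singleton]
      exact ⟨fun hy => congrArg Subtype.val (hall ⟨y, hy⟩), fun hy => hy ▸ hz⟩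
    have hcard : Z.card = 1 := by rw [hZ1]; simp
    rw [hs1, hcard]; simp
  · have hcyc : σ.IsCycle := by
      refine ⟨⟨z, hz⟩, h1, fun y _ => ?_⟩
      obtain ⟨n, hn⟩ := hc' y
      exact ⟨n, by simpa using hn⟩
    have hsup : σ.support = Finset.univ := by
      ext y
      simp only [Equiv.Perm.mem_support, Finset.mem_univ, iff_true]
      intro hy
      obtain ⟨n, hn⟩ := hc' y
      apply h1
      apply (σ ^ n).injective
      rw [← Equiv.Perm.mul_apply, ← pow_succ, pow_succ', Equiv.Perm.mul_apply, hn, hy]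
    rw [hcyc.sign, hsup, Finset.card_univ, Fintype.card_coe]
    push_cast
    rw [mul_neg, ← mul_pow]; simp

open Classical in
theorem simpLef_comm {X Y : Type*} [Fintype X] [DecidableEq X] [Fintype Y] [DecidableEq Y]
    (κ : X → X → Prop) (lam : Y → Y → Prop) (p : X → Y) (q : Y → X)
    (hp : DigCont κ lam p) (hq : DigCont lam κ q) :
    simpLef κ (q ∘ p) = simpLef lam (p ∘ q) := by
  have clq : ∀ {A B : Type _} [DecidableEq B] (κ : A → A → Prop) (lam : B → B → Prop)
      (p : A → B), DigCont κ lam p → ∀ S : Finset A, IsClique κ S → IsClique lam (S.image p) := by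
    intro A B _ κ lam p hp S hS
    rw [isClique_iff] at hS ⊢
    refine ⟨hS.1.image p, ?_⟩
    simp only [Finset.mem_image, forall_exists_index, and_imp]
    rintro _ x hx rfl _ y hy rfl
    rcases hS.2 x hx y hy with h | h
    · exact Or.inl (by rw [h])
    · exact hp x y h
  have clq2 : ∀ S : Finset Y, IsClique lam S → IsClique κ (S.image q) := by
    intro S hS
    rw [isClique_iff] at hS ⊢
    refine ⟨hS.1.image q, ?_⟩
    simp only [Finset.mem_image, forall_exists_index, and_imp]
    rintro _ x hx rfl _ y hy rfl
    rcases hS.2 x hx y hy with h | h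
    · exact Or.inl (by rw [h])
    · exact hq x y h
  have red : ∀ {A : Type _} [Fintype A] [DecidableEq A] (κ : A → A → Prop) (f : A → A),
      ∑ S : Finset A with IsClique κ S, wt f S
        = ∑ S : Finset A with IsClique κ S ∧ S.image f = S, wt f S := by
    intro A _ _ κ f
    rw [← Finset.filter_filter, Finset.sum_filter (p := fun S => Finset.image f S = S)]
    refine Finset.sum_congr rfl fun S _ => ?_
    by_cases h : S.image f = S
    · simp [h]
    · simp [h, wt]
  have red2 : ∑ S : Finset Y with IsClique lam S, wt (p ∘ q) S
        = ∑ S : Finset Y with IsClique lam S ∧ S.image (p ∘ q) = S, wt (p ∘ q) S := by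
    rw [← Finset.filter_filter, Finset.sum_filter (p := fun S => Finset.image (p ∘ q) S = S)]
    refine Finset.sum_congr rfl fun S _ => ?_
    by_cases h : S.image (p ∘ q) = S
    · rw [if_pos h]
    · rw [if_neg h, wt, dif_neg h]
  rw [simpLef_eq, simpLef_eq, red, red2]
  congr 1
  refine Finset.sum_bij' (fun S _ => S.image p) (fun T _ => T.image q) ?_ ?_ ?_ ?_ ?_
  · intro S hS
    simp only [Finset.mem_filter, Finset.mem_univ, true_and] at hS ⊢
    refine ⟨clq κ lam p hp S hS.1, ?_⟩
    conv_rhs => rw [← hS.2]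
    simp only [Finset.image_image]; rfl
  · intro S hS
    simp only [Finset.mem_filter, Finset.mem_univ, true_and] at hS ⊢
    refine ⟨clq2 S hS.1, ?_⟩
    conv_rhs => rw [← hS.2]
    simp only [Finset.image_image]; rfl
  · intro S hS
    simp only [Finset.mem_filter, Finset.mem_univ, true_and] at hS ⊢
    rw [Finset.image_image, hS.2]
  · intro S hS
    simp only [Finset.mem_filter, Finset.mem_univ, true_and] at hS ⊢
    rw [Finset.image_image, hS.2]
  · intro S hS
    simp only [Finset.mem_filter, Finset.mem_univ, true_and] at hS
    have h1 := hS.2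
    have h2 : (S.image p).image (p ∘ q) = S.image p := by
      conv_rhs => rw [← h1]
      simp only [Finset.image_image]; rfl
    have inj : Set.InjOn p S := by
      have : Set.InjOn (q ∘ p) S := Finset.card_image_iff.1 (by rw [h1])
      intro x hx y hy hxy
      exact this hx hy (by simp [hxy])
    unfold wt
    rw [dif_pos h1, dif_pos h2, Finset.card_image_of_injOn inj]
    congr 2
    let e : {x // x ∈ S} ≃ {y // y ∈ S.image p} :=
      Equiv.ofBijective (fun x => ⟨p x, Finset.mem_image_of_mem p x.2⟩) (by
        constructor
        · intro x y hxy
          exact Subtype.ext (inj x.2 y.2 (congrArg Subtype.val hxy))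
        · rintro ⟨y, hy⟩
          obtain ⟨x, hx, rfl⟩ := Finset.mem_image.1 hy
          exact ⟨⟨x, hx⟩, rfl⟩)
    exact Equiv.Perm.sign_eq_sign_of_equiv _ _ e (fun x => rfl)

open Classical in
noncomputable def orb {X : Type*} [Fintype X] (f : X → X) (z : X) : Finset X :=
  Finset.univ.filter (fun y => ∃ n, f^[n] z = y)

theorem mem_orb {X : Type*} [Fintype X] {f : X → X} {z y : X} :
    y ∈ orb f z ↔ ∃ n, f^[n] z = y := by simp [orb]

theorem self_mem_orb {X : Type*} [Fintype X] (f : X → X) (z : X) : z ∈ orb f z :=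
  mem_orb.2 ⟨0, rfl⟩

theorem map_mem_orb {X : Type*} [Fintype X] {f : X → X} {z y : X} (h : y ∈ orb f z) :
    f y ∈ orb f z := by
  obtain ⟨n, rfl⟩ := mem_orb.1 h
  exact mem_orb.2 ⟨n + 1, Function.iterate_succ_apply' f n z⟩

theorem iter_mem {X : Type*} [DecidableEq X] {f : X → X} {S : Finset X}
    (hS : S.image f = S) {y : X} (hy : y ∈ S) (n : ℕ) : f^[n] y ∈ S := by
  induction n with
  | zero => exact hy
  | succ n ih =>
    rw [Function.iterate_succ_apply']
    rw [← hS]; exact Finset.mem_image_of_mem f ih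

theorem iter_surj {X : Type*} [DecidableEq X] {f : X → X} {S : Finset X}
    (hS : S.image f = S) {y : X} (hy : y ∈ S) (n : ℕ) : ∃ z ∈ S, f^[n] z = y := by
  induction n generalizing y with
  | zero => exact ⟨y, hy, rfl⟩
  | succ n ih =>
    rw [← hS] at hy
    obtain ⟨x, hx, rfl⟩ := Finset.mem_image.1 hy
    obtain ⟨z, hz, rfl⟩ := ih hx
    exact ⟨z, hz, Function.iterate_succ_apply' f n z⟩

/-- periodic: some positive iterate returns. -/
def Per {X : Type*} (f : X → X) (z : X) : Prop := ∃ n, f^[n] (f z) = z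

theorem orb_back {X : Type*} [Fintype X] {f : X → X} {z y : X} (hz : Per f z)
    (hy : y ∈ orb f z) : ∃ n, f^[n] y = z := by
  obtain ⟨n, rfl⟩ := mem_orb.1 hy
  clear hy
  induction n with
  | zero => exact ⟨0, rfl⟩
  | succ n ih =>
    obtain ⟨k, hk⟩ := ih
    cases k with
    | zero =>
      obtain ⟨m, hm⟩ := hz
      refine ⟨m, ?_⟩
      rw [Function.iterate_succ_apply']
      simp only [Function.iterate_zero, id] at hk
      rw [hk, hm]
    | succ k =>
      refine ⟨k, ?_⟩
      rw [Function.iterate_succ_apply', ← Function.iterate_succ_apply, hk]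

theorem orb_image {X : Type*} [Fintype X] [DecidableEq X] {f : X → X} {z : X} (hz : Per f z) :
    (orb f z).image f = orb f z := by
  ext y
  constructor
  · intro h
    obtain ⟨x, hx, rfl⟩ := Finset.mem_image.1 h
    exact map_mem_orb hx
  · intro h
    obtain ⟨n, rfl⟩ := mem_orb.1 h
    cases n with
    | zero =>
      obtain ⟨m, hm⟩ := hz
      refine Finset.mem_image.2 ⟨f^[m] z, mem_orb.2 ⟨m, rfl⟩, ?_⟩
      rw [← Function.iterate_succ_apply' f, Function.iterate_succ_apply, hm]; rfl
    | succ n =>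
      exact Finset.mem_image.2 ⟨f^[n] z, mem_orb.2 ⟨n, rfl⟩,
        (Function.iterate_succ_apply' f n z).symm⟩

theorem orb_wt {X : Type*} [Fintype X] [DecidableEq X] {f : X → X} {z : X} (hz : Per f z) :
    wt f (orb f z) = -1 :=
  wt_cycle (orb_image hz) z (self_mem_orb f z) (fun _ hy => mem_orb.1 hy)

theorem orb_dichotomy {X : Type*} [Fintype X] [DecidableEq X] {f : X → X} {z : X}
    (hz : Per f z) {S : Finset X} (hS : S.image f = S) {y : X} (hyS : y ∈ S)
    (hy : y ∈ orb f z) : orb f z ⊆ S := by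
  obtain ⟨n, hn⟩ := orb_back hz hy
  intro w hw
  obtain ⟨m, rfl⟩ := mem_orb.1 hw
  rw [← hn]
  exact iter_mem hS (iter_mem hS hyS n) m

theorem sdiff_image {X : Type*} [DecidableEq X] {f : X → X} {S Z : Finset X}
    (hS : S.image f = S) (hZ : Z.image f = Z) (hZS : Z ⊆ S) : (S \ Z).image f = S \ Z := by
  have inj : Set.InjOn f S := Finset.card_image_iff.1 (by rw [hS])
  ext y
  simp only [Finset.mem_image, Finset.mem_sdiff]
  constructor
  · rintro ⟨x, ⟨hx, hxZ⟩, rfl⟩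
    refine ⟨hS ▸ Finset.mem_image_of_mem f hx, fun h => hxZ ?_⟩
    rw [← hZ] at h
    obtain ⟨w, hw, hwx⟩ := Finset.mem_image.1 h
    rw [← inj (hZS hw) hx hwx]; exact hw
  · rintro ⟨hy, hyZ⟩
    have hy' := hy
    rw [← hS] at hy'
    obtain ⟨x, hx, rfl⟩ := Finset.mem_image.1 hy'
    exact ⟨x, ⟨hx, fun h => hyZ (hZ ▸ Finset.mem_image_of_mem f h)⟩, rfl⟩

theorem per_of_mem {X : Type*} [DecidableEq X] {f : X → X} {S : Finset X}
    (hS : S.image f = S) {x : X} (hx : x ∈ S) : Per f x := by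
  have hfin : ¬ Function.Injective (fun n : ℕ => (⟨f^[n] x, iter_mem hS hx n⟩ : {x // x ∈ S})) :=
    not_injective_infinite_finite _
  have inj : Set.InjOn f S := Finset.card_image_iff.1 (by rw [hS])
  have key : ∀ i j : ℕ, i < j → f^[i] x = f^[j] x → Per f x := by
    intro i
    induction i with
    | zero =>
      intro j hj h
      obtain ⟨k, rfl⟩ : ∃ k, j = k + 1 := ⟨j - 1, by omega⟩
      exact ⟨k, h.symm⟩
    | succ i ih =>
      intro j hj h
      obtain ⟨k, rfl⟩ : ∃ k, j = k + 1 := ⟨j - 1, by omega⟩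
      rw [Function.iterate_succ_apply', Function.iterate_succ_apply'] at h
      exact ih k (by omega) (inj (iter_mem hS hx i) (iter_mem hS hx k) h)
  simp only [Function.Injective, not_forall] at hfin
  obtain ⟨i, j, h, hne⟩ := hfin
  have h' : f^[i] x = f^[j] x := congrArg Subtype.val h
  rcases lt_or_gt_of_ne hne with h1 | h1
  · exact key i j h1 h'
  · exact key j i h1 h'.symm

theorem exists_per {X : Type*} [Fintype X] (f : X → X) (b : X) : ∃ c ∈ orb f b, Per f c := by
  have hfin : ¬ Function.Injective (fun n : ℕ => f^[n] b) := not_injective_infinite_finite _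
  simp only [Function.Injective, not_forall] at hfin
  have key : ∀ i j : ℕ, i < j → f^[i] b = f^[j] b → ∃ c ∈ orb f b, Per f c := by
    intro i j hij h
    refine ⟨f^[i] b, mem_orb.2 ⟨i, rfl⟩, j - i - 1, ?_⟩
    rw [← Function.iterate_succ_apply, ← Function.iterate_add_apply]
    rw [h]; congr 1; congr 1; omega
  obtain ⟨i, j, h, hne⟩ := hfin
  rcases lt_or_gt_of_ne hne with h1 | h1
  · exact key i j h1 h
  · exact key j i h1 h.symm

structure Ctg {X : Type*} (κ : X → X → Prop) (f g : X → X) : Prop where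
  ff : ∀ x y, EE κ x y → EE κ (f x) (f y)
  gg : ∀ x y, EE κ x y → EE κ (g x) (g y)
  fg : ∀ x y, EE κ x y → EE κ (f x) (g y)

theorem Ctg.symm' {X : Type*} {κ : X → X → Prop} (hs : Symmetric κ) {f g : X → X}
    (h : Ctg κ f g) : Ctg κ g f :=
  ⟨h.gg, h.ff, fun x y hxy => (h.fg y x (hxy.symm' hs)).symm' hs⟩

theorem clique_union_orb {X : Type*} [Fintype X] [DecidableEq X] {κ : X → X → Prop}
    (hs : Symmetric κ) {f g : X → X} (hc : Ctg κ f g) {S : Finset X} (hS : IsClique κ S)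
    (hfS : S.image f = S) {x0 : X} (hx : x0 ∈ S) : IsClique κ (S ∪ orb f (g x0)) := by
  rw [isClique_iff] at hS ⊢
  have it : ∀ n x y, EE κ x y → EE κ (f^[n] x) (f^[n] y) := by
    intro n
    induction n with
    | zero => intro x y h; exact h
    | succ n ih =>
      intro x y h
      rw [Function.iterate_succ_apply, Function.iterate_succ_apply]
      exact ih _ _ (hc.ff _ _ h)
  have h1 : ∀ y ∈ S, EE κ y (g x0) := by
    intro y hy
    rw [← hfS] at hy
    obtain ⟨w, hw, rfl⟩ := Finset.mem_image.1 hy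
    exact hc.fg _ _ (hS.2 w hw x0 hx)
  have h2 : ∀ y ∈ S, ∀ n, EE κ y (f^[n] (g x0)) := by
    intro y hy n
    obtain ⟨z, hz, rfl⟩ := iter_surj hfS hy n
    exact it n _ _ (h1 z hz)
  have h3 : ∀ n, EE κ (g x0) (f^[n] (g x0)) := by
    intro n
    cases n with
    | zero => exact Or.inl rfl
    | succ n =>
      rw [Function.iterate_succ_apply']
      exact (hc.fg _ _ ((h2 x0 hx n).symm' hs)).symm' hs
  have h4 : ∀ n k, EE κ (f^[n] (g x0)) (f^[n + k] (g x0)) := by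
    intro n k
    rw [Function.iterate_add_apply]
    exact it n _ _ (h3 k)
  refine ⟨hS.1.mono Finset.subset_union_left, ?_⟩
  intro x hx y hy
  rcases Finset.mem_union.1 hx with hx | hx <;> rcases Finset.mem_union.1 hy with hy | hy
  · exact hS.2 x hx y hy
  · obtain ⟨n, rfl⟩ := mem_orb.1 hy
    exact h2 x hx n
  · obtain ⟨n, rfl⟩ := mem_orb.1 hx
    exact (h2 y hy n).symm' hs
  · obtain ⟨n, rfl⟩ := mem_orb.1 hx
    obtain ⟨m, rfl⟩ := mem_orb.1 hy
    rcases le_total n m with h | h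
    · obtain ⟨k, rfl⟩ := Nat.exists_eq_add_of_le h
      exact h4 n k
    · obtain ⟨k, rfl⟩ := Nat.exists_eq_add_of_le h
      exact (h4 m k).symm' hs

theorem IsClique.sub {X : Type*} {κ : X → X → Prop} {S T : Finset X} (h : IsClique κ T)
    (hST : S ⊆ T) (hn : S.Nonempty) : IsClique κ S :=
  ⟨hn, fun x hx y hy => h.2 x (hST hx) y (hST hy)⟩

open Classical in
/-- the sum over invariant cliques through `x0`. -/
noncomputable def FS {X : Type*} [Fintype X] [DecidableEq X] (κ : X → X → Prop) (f : X → X)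
    (x0 : X) : ℤ :=
  ∑ S : Finset X with (IsClique κ S ∧ S.image f = S ∧ x0 ∈ S), wt f S

theorem FS_zero_A {X : Type*} [Fintype X] [DecidableEq X] {κ : X → X → Prop}
    (hs : Symmetric κ) {f g : X → X} (hc : Ctg κ f g) {x0 : X}
    (hA : x0 ∉ orb f (g x0)) : FS κ f x0 = 0 := by
  classical
  obtain ⟨c, hcb, hcp⟩ := exists_per f (g x0)
  have hsub : orb f c ⊆ orb f (g x0) := by
    intro y hy
    obtain ⟨n, rfl⟩ := mem_orb.1 hy
    obtain ⟨m, rfl⟩ := mem_orb.1 hcb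
    exact mem_orb.2 ⟨n + m, Function.iterate_add_apply f n m _⟩
  have hxZ : x0 ∉ orb f c := fun h => hA (hsub h)
  have hZi := orb_image hcp
  have hZw := orb_wt hcp
  have hdis : ∀ S : Finset X, S.image f = S → ¬ orb f c ⊆ S → Disjoint S (orb f c) := by
    intro S hS h
    rw [Finset.disjoint_left]
    intro y hy hy'
    exact h (orb_dichotomy hcp hS hy hy')
  unfold FS
  rw [← Finset.sum_filter_add_sum_filter_not _ (fun S => orb f c ⊆ S)]
  rw [add_eq_zero_iff_eq_neg, ← Finset.sum_neg_distrib]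
  symm
  refine Finset.sum_bij' (fun S _ => S ∪ orb f c) (fun S _ => S \ orb f c) ?_ ?_ ?_ ?_ ?_
  · intro S hS
    simp only [Finset.mem_filter, Finset.mem_univ, true_and] at hS ⊢
    obtain ⟨⟨h1, h2, h3⟩, h4⟩ := hS
    refine ⟨⟨(clique_union_orb hs hc h1 h2 h3).sub (Finset.union_subset_union_right hsub)
      ⟨x0, Finset.mem_union_left _ h3⟩, ?_, Finset.mem_union_left _ h3⟩, Finset.subset_union_right⟩
    rw [Finset.image_union, h2, hZi]
  · intro S hS
    simp only [Finset.mem_filter, Finset.mem_univ, true_and] at hS ⊢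
    obtain ⟨⟨h1, h2, h3⟩, h4⟩ := hS
    have h5 : x0 ∈ S \ orb f c := Finset.mem_sdiff.2 ⟨h3, hxZ⟩
    refine ⟨⟨h1.sub Finset.sdiff_subset ⟨x0, h5⟩, sdiff_image h2 hZi h4, h5⟩, ?_⟩
    intro h
    exact (Finset.mem_sdiff.1 (h (self_mem_orb f c))).2 (self_mem_orb f c)
  · intro S hS
    simp only [Finset.mem_filter, Finset.mem_univ, true_and] at hS ⊢
    exact Finset.union_sdiff_cancel_right (hdis S hS.1.2.1 hS.2)
  · intro S hS
    simp only [Finset.mem_filter, Finset.mem_univ, true_and] at hS ⊢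
    exact Finset.sdiff_union_of_subset hS.2
  · intro S hS
    simp only [Finset.mem_filter, Finset.mem_univ, true_and] at hS
    rw [wt_union hS.1.2.1 hZi (hdis S hS.1.2.1 hS.2), hZw]; ring

theorem FS_zero_B {X : Type*} [Fintype X] [DecidableEq X] {κ : X → X → Prop}
    {f : X → X} {x0 : X} (hB : x0 ∉ orb f (f x0)) : FS κ f x0 = 0 := by
  classical
  unfold FS
  rw [Finset.filter_false_of_mem]
  · simp
  · rintro S - ⟨-, h2, h3⟩
    exact hB (mem_orb.2 (per_of_mem h2 h3))

open Classical in
theorem FS_AB {X : Type*} [Fintype X] [DecidableEq X] {κ : X → X → Prop}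
    {f : X → X} {x0 : X} (hB : x0 ∈ orb f (f x0)) :
    FS κ f x0 = ∑ R : Finset X with (R.image f = R ∧ x0 ∉ R ∧ IsClique κ (R ∪ orb f x0)),
      - wt f R := by
  have hp : Per f x0 := mem_orb.1 hB
  have hZi := orb_image hp
  have hZw := orb_wt hp
  have hx := self_mem_orb f x0
  have hdis : ∀ S : Finset X, S.image f = S → x0 ∉ S → Disjoint S (orb f x0) := by
    intro S hS h
    rw [Finset.disjoint_left]
    intro y hy hy'
    exact h (orb_dichotomy hp hS hy hy' hx)
  symm
  unfold FS
  refine Finset.sum_bij' (fun S _ => S ∪ orb f x0) (fun S _ => S \ orb f x0) ?_ ?_ ?_ ?_ ?_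
  · intro S hS
    simp only [Finset.mem_filter, Finset.mem_univ, true_and] at hS ⊢
    exact ⟨hS.2.2, by rw [Finset.image_union, hS.1, hZi], Finset.mem_union_right _ hx⟩
  · intro S hS
    simp only [Finset.mem_filter, Finset.mem_univ, true_and] at hS ⊢
    have hsub := orb_dichotomy hp hS.2.1 hS.2.2 hx
    refine ⟨sdiff_image hS.2.1 hZi hsub, fun h => (Finset.mem_sdiff.1 h).2 hx, ?_⟩
    rw [Finset.sdiff_union_of_subset hsub]; exact hS.1
  · intro S hS
    simp only [Finset.mem_filter, Finset.mem_univ, true_and] at hS ⊢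
    exact Finset.union_sdiff_cancel_right (hdis S hS.1 hS.2.1)
  · intro S hS
    simp only [Finset.mem_filter, Finset.mem_univ, true_and] at hS ⊢
    exact Finset.sdiff_union_of_subset (orb_dichotomy hp hS.2.1 hS.2.2 hx)
  · intro S hS
    simp only [Finset.mem_filter, Finset.mem_univ, true_and] at hS
    rw [wt_union hS.1 hZi (hdis S hS.1 hS.2.1), hZw]; ring

theorem orb_transfer {X : Type*} [Fintype X] {f g : X → X} {x0 : X}
    (ho : ∀ x, x ≠ x0 → f x = g x) {b : X} (h : x0 ∈ orb f b) : x0 ∈ orb g b := by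
  obtain ⟨n, hn⟩ := mem_orb.1 h
  clear h
  induction n generalizing b with
  | zero => exact mem_orb.2 ⟨0, hn⟩
  | succ n ih =>
    by_cases hb : b = x0
    · rw [hb]; exact self_mem_orb g x0
    · rw [Function.iterate_succ_apply, ho b hb] at hn
      obtain ⟨m, hm⟩ := mem_orb.1 (ih hn)
      exact mem_orb.2 ⟨m + 1, hm⟩

theorem clique_swap {X : Type*} [Fintype X] [DecidableEq X] {κ : X → X → Prop}
    (hs : Symmetric κ) {f g : X → X} (hc : Ctg κ f g) {x0 : X}
    (ho : ∀ x, x ≠ x0 → f x = g x) (hA : x0 ∈ orb f (g x0)) (hB : x0 ∈ orb f (f x0))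
    {R : Finset X} (hR : R.image f = R) (hq : IsClique κ (R ∪ orb f x0)) :
    IsClique κ (R ∪ orb g x0) := by
  have hp : Per f x0 := mem_orb.1 hB
  have h1 := clique_union_orb hs hc hq (by rw [Finset.image_union, hR, orb_image hp])
    (Finset.mem_union_right _ (self_mem_orb f x0))
  refine h1.sub ?_ ⟨x0, Finset.mem_union_right _ (self_mem_orb g x0)⟩
  refine Finset.union_subset_union Finset.subset_union_left ?_
  intro y hy
  obtain ⟨n, rfl⟩ := mem_orb.1 hy
  clear hy
  induction n with
  | zero => exact hA
  | succ n ih =>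
    rw [Function.iterate_succ_apply']
    by_cases h : g^[n] x0 = x0
    · rw [h]; exact self_mem_orb f _
    · rw [← ho _ h]; exact map_mem_orb ih

theorem FS_eq {X : Type*} [Fintype X] [DecidableEq X] {κ : X → X → Prop}
    (hs : Symmetric κ) {f g : X → X} (hc : Ctg κ f g) {x0 : X}
    (ho : ∀ x, x ≠ x0 → f x = g x) : FS κ f x0 = FS κ g x0 := by
  classical
  have ho' : ∀ x, x ≠ x0 → g x = f x := fun x hx => (ho x hx).symm
  by_cases hA : x0 ∈ orb f (g x0)
  · have hA' := orb_transfer ho hA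
    by_cases hB : x0 ∈ orb f (f x0)
    · have hB' := orb_transfer ho hB
      rw [FS_AB hB, FS_AB hA']
      have him : ∀ R : Finset X, x0 ∉ R → R.image f = R.image g := fun R hR =>
        Finset.image_congr (fun x hx => ho x (fun h => hR (h ▸ hx)))
      refine Finset.sum_congr ?_ ?_
      · ext R
        simp only [Finset.mem_filter, Finset.mem_univ, true_and]
        constructor
        · rintro ⟨h1, h2, h3⟩
          exact ⟨him R h2 ▸ h1, h2, clique_swap hs hc ho hA hB h1 h3⟩
        · rintro ⟨h1, h2, h3⟩
          exact ⟨(him R h2).trans h1, h2, clique_swap hs (hc.symm' hs) ho' hB' hA' h1 h3⟩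
      · intro R hR
        simp only [Finset.mem_filter, Finset.mem_univ, true_and] at hR
        rw [wt_congr (fun x hx => ho x (fun h => hR.2.1 (h ▸ hx)))]
    · rw [FS_zero_B hB, FS_zero_A hs (hc.symm' hs) (fun h => hB (orb_transfer ho' h))]
  · rw [FS_zero_A hs hc hA, FS_zero_B (fun h => hA (orb_transfer ho' h))]

open Classical in
theorem simpLef_split {X : Type*} [Fintype X] [DecidableEq X] (κ : X → X → Prop) (f : X → X)
    (x0 : X) : simpLef κ f =
      - (FS κ f x0 + ∑ S : Finset X with (IsClique κ S ∧ x0 ∉ S), wt f S) := by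
  rw [simpLef_eq, ← Finset.sum_filter_add_sum_filter_not _ (fun S => x0 ∈ S),
    Finset.filter_filter, Finset.filter_filter]
  congr 2
  unfold FS
  symm
  apply Finset.sum_subset
  · intro S hS
    simp only [Finset.mem_filter, Finset.mem_univ, true_and] at hS ⊢
    exact ⟨hS.1, hS.2.2⟩
  · intro S hS hS'
    simp only [Finset.mem_filter, Finset.mem_univ, true_and] at hS hS'
    unfold wt
    rw [dif_neg]
    intro h
    exact hS' ⟨hS.1, h, hS.2⟩

theorem simpLef_one {X : Type*} [Fintype X] [DecidableEq X] {κ : X → X → Prop}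
    (hs : Symmetric κ) {f g : X → X} (hc : Ctg κ f g) {x0 : X}
    (ho : ∀ x, x ≠ x0 → f x = g x) : simpLef κ f = simpLef κ g := by
  classical
  rw [simpLef_split κ f x0, simpLef_split κ g x0, FS_eq hs hc ho]
  congr 2
  refine Finset.sum_congr rfl fun S hS => ?_
  simp only [Finset.mem_filter, Finset.mem_univ, true_and] at hS
  exact wt_congr (fun x hx => ho x (fun h => hS.2 (h ▸ hx)))

theorem simpLef_ctg {X : Type*} [Fintype X] [DecidableEq X] {κ : X → X → Prop}
    (hs : Symmetric κ) {f g : X → X} (hc : Ctg κ f g) : simpLef κ f = simpLef κ g := by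
  have hgf := (hc.symm' hs).fg
  have key : ∀ A : Finset X, simpLef κ f = simpLef κ (fun x => if x ∈ A then g x else f x) := by
    intro A
    induction A using Finset.induction_on with
    | empty => simp
    | insert a A ha ih =>
      rw [ih]
      have mix : ∀ (A B : Finset X) (x y : X), EE κ x y →
          EE κ (if x ∈ A then g x else f x) (if y ∈ B then g y else f y) := by
        intro A B x y h
        split_ifs
        · exact hc.gg _ _ h
        · exact hgf _ _ h
        · exact hc.fg _ _ h
        · exact hc.ff _ _ h
      refine simpLef_one hs ⟨mix _ _, mix _ _, mix _ _⟩ (x0 := a) ?_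
      intro x hx
      simp [hx]
  simpa using key Finset.univ

/-- Let `(X,κ)` and `(Y,λ)` be finite digital images, let `f : X → X` be a continuous
self-map, and let `g : X → Y` be a strong homotopy equivalence with strong homotopy
inverse `h : Y → X` (i.e. `g, h` continuous, `h ∘ g ≃* id_X` and `g ∘ h ≃* id_Y`).
Then `L(f) = L(g ∘ f ∘ h)`. -/
theorem simpLef_strong_homotopy_equivalence {X Y : Type*} [Fintype X] [DecidableEq X]
    [Fintype Y] [DecidableEq Y]
    (κ : X → X → Prop) (hκsym : Symmetric κ) (hκirr : Irreflexive κ)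
    (lam : Y → Y → Prop) (hlamsym : Symmetric lam) (hlamirr : Irreflexive lam)
    (f : X → X) (hf : DigCont κ κ f)
    (g : X → Y) (h : Y → X) (hg : DigCont κ lam g) (hh : DigCont lam κ h)
    (hgh : StrongHomotopic κ κ (h ∘ g) id) (hhg : StrongHomotopic lam lam (g ∘ h) id) :
    simpLef κ f = simpLef lam (g ∘ f ∘ h) := by
  have e1 : simpLef lam (g ∘ f ∘ h) = simpLef κ ((f ∘ h) ∘ g) := by
    refine (simpLef_comm κ lam g (f ∘ h) hg ?_).symm
    intro x y hxy
    rcases hh x y hxy with h1 | h1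
    · exact Or.inl (congrArg f h1)
    · exact hf _ _ h1
  have hfE : ∀ x y, EE κ x y → EE κ (f x) (f y) := by
    rintro x y (h1 | h1)
    · exact Or.inl (by rw [h1])
    · exact hf _ _ h1
  obtain ⟨m, H, H0, Hm, HH⟩ := hgh
  have HE : ∀ x x' t t', t ≤ m → t' ≤ m → EE κ x x' → (t = t' ∨ t + 1 = t' ∨ t' + 1 = t) →
      EE κ (f (H x t)) (f (H x' t')) := by
    intro x x' t t' ht ht' hx htt
    apply hfE
    by_cases hne : x ≠ x' ∨ t ≠ t'
    · exact HH x x' t t' ht ht' hx htt hne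
    · push Not at hne
      exact Or.inl (by rw [hne.1, hne.2])
  have key : ∀ t, t ≤ m → simpLef κ (fun x => f (H x 0)) = simpLef κ (fun x => f (H x t)) := by
    intro t
    induction t with
    | zero => intro _; rfl
    | succ t ih =>
      intro ht
      rw [ih (by omega)]
      refine simpLef_ctg hκsym ⟨?_, ?_, ?_⟩
      · intro x y hxy
        exact HE x y t t (by omega) (by omega) hxy (by omega)
      · intro x y hxy
        exact HE x y (t + 1) (t + 1) (by omega) (by omega) hxy (by omega)
      · intro x y hxy
        exact HE x y t (t + 1) (by omega) (by omega) hxy (by omega)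
  have h2 := key m le_rfl
  rw [e1]
  have e2 : (fun x => f (H x 0)) = (f ∘ h) ∘ g := by funext x; rw [H0]; rfl
  have e3 : (fun x => f (H x m)) = f := by funext x; rw [Hm]; rfl
  rw [e2, e3] at h2
  exact h2.symm
end

section
/- Let X ⊆ ℤ^n and Y ⊆ ℤ^m be finite digital images with c1-adjacency, where n, m ≤ 3, and suppose X and Y are homotopy equivalent, i.e., there exist c1-continuous maps g : X → Y and h : Y → X with h ∘ g ≃ id_X and g ∘ h ≃ id_Y. Then the cubical Lefschetz spectra of X and Y coincide: {L̄(f) : f a c1-continuous self-map of X} = {L̄(f′) : f′ a c1-continuous self-map of Y}. -/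
/-- `c1`-adjacency on `ℤ^n`: `x, y` are `c1`-adjacent iff `∑ i, |x i − y i| = 1`. -/
def c1Adj {n : ℕ} (x y : Fin n → ℤ) : Prop := (∑ i, |x i - y i|) = 1

/-- `f` is `c1`-continuous on the digital image `X ⊆ ℤ^n`: `c1`-adjacent points of `X` have
equal or `c1`-adjacent images. -/
def c1Cont {n m : ℕ} (X : Finset (Fin n → ℤ)) (f : (Fin n → ℤ) → (Fin m → ℤ)) : Prop :=
  ∀ x ∈ X, ∀ y ∈ X, c1Adj x y → f x = f y ∨ c1Adj (f x) (f y)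

/-- `f` maps the digital image `X` into the digital image `Y`. -/
def MapsInto {n m : ℕ} (X : Finset (Fin n → ℤ)) (Y : Finset (Fin m → ℤ))
    (f : (Fin n → ℤ) → (Fin m → ℤ)) : Prop :=
  ∀ x ∈ X, f x ∈ Y

/-- The elementary cube `σ = t_1 × ⋯ × t_n ⊆ ℤ^n` with minimal corner `a`, where
`t_i = {a i, a i + 1}` for `i ∈ D` (the nondegenerate directions, so `dim σ = D.card`)
and `t_i = {a i}` otherwise. -/
def eCube {n : ℕ} (a : Fin n → ℤ) (D : Finset (Fin n)) : Finset (Fin n → ℤ) :=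
  D.powerset.image (fun s i => a i + if i ∈ s then 1 else 0)

/-- A homotopy between continuous maps `f, g : X → Y` is `H : X × {0,…,k} → Y` with
`H(x,0) = f(x)`, `H(x,k) = g(x)`, sending consecutive stages of each point to equal or
adjacent points, and continuous at each stage; `f ≃ g` iff such an `H` exists. -/
def c1Homotopic {n m : ℕ} (X : Finset (Fin n → ℤ)) (Y : Finset (Fin m → ℤ))
    (f g : (Fin n → ℤ) → (Fin m → ℤ)) : Prop :=
  ∃ (k : ℕ) (H : (Fin n → ℤ) → ℕ → (Fin m → ℤ)),
    (∀ x ∈ X, ∀ t ≤ k, H x t ∈ Y) ∧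
    (∀ x ∈ X, H x 0 = f x) ∧ (∀ x ∈ X, H x k = g x) ∧
    (∀ x ∈ X, ∀ t, t + 1 ≤ k → (H x t = H x (t + 1) ∨ c1Adj (H x t) (H x (t + 1)))) ∧
    (∀ t ≤ k, ∀ x ∈ X, ∀ x' ∈ X, c1Adj x x' → (H x t = H x' t ∨ c1Adj (H x t) (H x' t)))

/-- `x` is a `k`-approximate fixed point of `f` on `X`: there is a `c1`-path in `X` from
`x` to `f x` of length at most `k`. -/
def nApproxFix {n : ℕ} (X : Finset (Fin n → ℤ)) (f : (Fin n → ℤ) → (Fin n → ℤ))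
    (k : ℕ) (x : Fin n → ℤ) : Prop :=
  ∃ (m : ℕ) (p : ℕ → (Fin n → ℤ)), m ≤ k ∧ p 0 = x ∧ p m = f x ∧
    (∀ t ≤ m, p t ∈ X) ∧
    (∀ t, t + 1 ≤ m → (p t = p (t + 1) ∨ c1Adj (p t) (p (t + 1))))

open Classical in
/-- `ε(f, σ)` for `σ = eCube a D` with `f(σ) = σ`: on the nondegenerate directions `D` of
`σ`, `f` is given by an affine map `x ↦ b + Mx` with `M` a signed permutation matrix
(a permutation `π` of `D` together with signs `s : D → {±1}`), and
`ε(f,σ) = det M = sgn(π) ⬝ ∏ s`. (Junk value `0` if `f` is not of this form on `σ`.) -/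
noncomputable def cubeSign {n : ℕ} (f : (Fin n → ℤ) → (Fin n → ℤ))
    (a : Fin n → ℤ) (D : Finset (Fin n)) : ℤ :=
  if h : ∃ p : Equiv.Perm {i // i ∈ D} × ({i // i ∈ D} → ℤ),
      (∀ i, p.2 i = 1 ∨ p.2 i = -1) ∧
      ∀ x ∈ eCube a D, ∀ i : {i // i ∈ D},
        f x (i : Fin n) = f a (i : Fin n) + p.2 i * (x ((p.1 i : Fin n)) - a ((p.1 i : Fin n)))
  then ((Equiv.Perm.sign h.choose.1 : ℤˣ) : ℤ) * ∏ i, h.choose.2 i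
  else 0

open Classical in
/-- The cubical Lefschetz number `L̄(f) = ∑_σ (−1)^{dim σ} ε(f,σ)`, summing over all
elementary cubes `σ ⊆ X` with `f(σ) = σ`. -/
noncomputable def cubLef {n : ℕ} (X : Finset (Fin n → ℤ))
    (f : (Fin n → ℤ) → (Fin n → ℤ)) : ℤ :=
  ∑ a ∈ X, ∑ D : Finset (Fin n),
    if eCube a D ⊆ X ∧ (eCube a D).image f = eCube a D then
      (-1 : ℤ) ^ D.card * cubeSign f a D
    else 0

open Classical in
/-- The cubical Euler characteristic `χ̄(X) = ∑_q (−1)^q k_q`, with `k_q` the number of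
elementary cubes of dimension `q` contained in `X`. -/
noncomputable def cubEuler {n : ℕ} (X : Finset (Fin n → ℤ)) : ℤ :=
  ∑ a ∈ X, ∑ D : Finset (Fin n),
    if eCube a D ⊆ X then (-1 : ℤ) ^ D.card else 0


namespace CL

/-- vertices of the standard cube -/
abbrev V (q : ℕ) := Fin q → Bool

/-- the face inclusion -/
def dl {q : ℕ} (i : Fin (q+1)) (s : Bool) (x : V q) : V (q+1) :=
  Fin.insertNth (α := fun _ => Bool) i s x

/-- parametrised elementary cube -/
def pc {n q : ℕ} (b : Fin n → ℤ) (e : Fin q → Fin n) (r : V q) (x : V q) : Fin n → ℤ :=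
  b + ∑ i, if xor (x i) (r i) then Pi.single (e i) (1:ℤ) else 0

/-- sign of a reflection -/
def sg {q : ℕ} (r : V q) : ℚ := ∏ i, if r i then -1 else 1

def fs (s : Bool) : ℚ := if s then 1 else -1

def AA {n q : ℕ} (e e' : Fin q → Fin n) : ℚ :=
  Matrix.det (Matrix.of fun k i => if e' k = e i then (1:ℚ) else 0)

def coef {n q : ℕ} (w : V q → Fin n → ℤ) (b : Fin n → ℤ) (e' : Fin q → Fin n) : ℚ :=
  ∑ e : Fin q → Fin n, ∑ r : V q, if w = pc b e r then sg r * AA e e' else 0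

/-- distance at most one -/
def Near {n : ℕ} (y z : Fin n → ℤ) : Prop := ∑ i, |y i - z i| ≤ 1

def Step {n q : ℕ} (w : V q → Fin n → ℤ) : Prop :=
  ∀ (x : V q) (i : Fin q) (s : Bool), Near (w x) (w (Function.update x i s))

theorem pc_apply {n q : ℕ} (b : Fin n → ℤ) (e : Fin q → Fin n) (r x : V q) (k : Fin n) :
    pc b e r x k = b k + ∑ i, if xor (x i) (r i) ∧ e i = k then (1:ℤ) else 0 := by
  simp only [pc, Pi.add_apply, Finset.sum_apply]
  congr 1
  apply Finset.sum_congr rfl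
  intro i _
  by_cases h : xor (x i) (r i) = true
  · by_cases h2 : e i = k
    · subst h2; simp [h]
    · simp [h, h2, Ne.symm h2]
  · simp [h]

theorem pc_ge {n q : ℕ} (b : Fin n → ℤ) (e : Fin q → Fin n) (r x : V q) (k : Fin n) :
    b k ≤ pc b e r x k := by
  rw [pc_apply]
  have : 0 ≤ ∑ i, if xor (x i) (r i) ∧ e i = k then (1:ℤ) else 0 :=
    Finset.sum_nonneg (fun i _ => by split_ifs <;> simp)
  linarith

theorem pc_self {n q : ℕ} (b : Fin n → ℤ) (e : Fin q → Fin n) (r : V q) :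
    pc b e r r = b := by
  simp [pc]

theorem pc_unique {n q : ℕ} {b b' : Fin n → ℤ} {e e' : Fin q → Fin n} {r r' : V q}
    (h : pc b e r = pc b' e' r') : b = b' ∧ e = e' ∧ r = r' := by
  have hb : b = b' := by
    funext k
    apply le_antisymm
    · have := pc_ge b e r r' k
      rwa [h, pc_self] at this
    · have := pc_ge b' e' r' r k
      rwa [← h, pc_self] at this
  subst hb
  have hr : r = r' := by
    have h1 : pc b e' r' r = b := by rw [← h, pc_self]
    funext i
    have h2 := congrFun h1 (e' i)
    rw [pc_apply] at h2
    have h3 : (∑ j, if xor (r j) (r' j) ∧ e' j = e' i then (1:ℤ) else 0) = 0 := by linarith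
    rw [Finset.sum_eq_zero_iff_of_nonneg (fun j _ => by split_ifs <;> simp)] at h3
    have h4 := h3 i (Finset.mem_univ _)
    cases hri : r i <;> cases hri' : r' i <;> simp_all
  subst hr
  refine ⟨rfl, ?_, rfl⟩
  funext i
  have h1 := congrFun (congrFun h (Function.update r i (!(r i)))) (e i)
  rw [pc_apply, pc_apply] at h1
  have key : ∀ f : Fin q → Fin n, (∑ j, if xor (Function.update r i (!(r i)) j) (r j) ∧ f j = e i then (1:ℤ) else 0) = if f i = e i then 1 else 0 := by
    intro f
    rw [Finset.sum_eq_single i]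
    · simp
    · intro j _ hj
      simp [Function.update_of_ne hj]
    · simp
  rw [key, key] at h1
  by_contra hne
  have : ¬ (e' i = e i) := fun h => hne h.symm
  simp [this] at h1

theorem coef_pc {n q : ℕ} (b b' : Fin n → ℤ) (e e' : Fin q → Fin n) (r : V q) :
    coef (pc b e r) b' e' = if b = b' then sg r * AA e e' else 0 := by
  unfold coef
  rw [Finset.sum_eq_single e]
  · rw [Finset.sum_eq_single r]
    · by_cases h : b = b'
      · subst h; simp
      · have : ¬ (pc b e r = pc b' e r) := fun h' => h (pc_unique h').1
        simp [h, this]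
    · intro r' _ hr
      rw [if_neg]
      intro h'
      exact hr (pc_unique h').2.2.symm
    · simp
  · intro e2 _ he
    apply Finset.sum_eq_zero
    intro r' _
    rw [if_neg]
    intro h'
    exact he (pc_unique h').2.1.symm
  · simp

theorem coef_form {n q : ℕ} {w : V q → Fin n → ℤ} {b : Fin n → ℤ} {e' : Fin q → Fin n}
    (h : coef w b e' ≠ 0) : ∃ e r, w = pc b e r ∧ AA e e' ≠ 0 := by
  unfold coef at h
  obtain ⟨e, _, he⟩ := Finset.exists_ne_zero_of_sum_ne_zero h
  obtain ⟨r, _, hr⟩ := Finset.exists_ne_zero_of_sum_ne_zero he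
  refine ⟨e, r, ?_⟩
  split_ifs at hr with h1
  · exact ⟨h1, right_ne_zero_of_mul hr⟩
  · exact absurd rfl hr

theorem AA_leibniz {n q : ℕ} (e e' : Fin q → Fin n) :
    AA e e' = ∑ π : Equiv.Perm (Fin q), if e = e' ∘ π then ((Equiv.Perm.sign π : ℤ) : ℚ) else 0 := by
  unfold AA
  rw [Matrix.det_apply]
  apply Finset.sum_congr rfl
  intro π _
  by_cases h : e = e' ∘ π
  · simp [h, Units.smul_def]
  · rw [if_neg h]
    obtain ⟨i, hi⟩ := Function.ne_iff.1 h
    rw [Finset.prod_eq_zero (Finset.mem_univ i), smul_zero]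
    simp only [Matrix.of_apply]
    rw [if_neg]
    intro h2; exact hi h2.symm

theorem AA_inj {n q : ℕ} {e e' : Fin q → Fin n} (h : AA e e' ≠ 0) :
    Function.Injective e ∧ Function.Injective e' := by
  constructor
  · intro i j hij
    by_contra hne
    apply h
    apply Matrix.det_zero_of_column_eq hne
    intro k; simp [hij]
  · intro i j hij
    by_contra hne
    apply h
    apply Matrix.det_zero_of_row_eq hne
    funext k; simp [hij]

theorem AA_perm {n q : ℕ} {e e' : Fin q → Fin n} (h : AA e e' ≠ 0) :
    ∃ π : Equiv.Perm (Fin q), e = e' ∘ π := by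
  rw [AA_leibniz] at h
  obtain ⟨π, _, hπ⟩ := Finset.exists_ne_zero_of_sum_ne_zero h
  refine ⟨π, ?_⟩
  by_contra h2
  simp [h2] at hπ

theorem AA_comp_right {n q : ℕ} (e e' : Fin q → Fin n) (π : Equiv.Perm (Fin q)) :
    AA e (e' ∘ π) = ((Equiv.Perm.sign π : ℤ) : ℚ) * AA e e' := by
  unfold AA
  rw [← Matrix.det_permute]
  rfl

theorem AA_comp_left {n q : ℕ} (e e' : Fin q → Fin n) (π : Equiv.Perm (Fin q)) :
    AA (e ∘ π) e' = ((Equiv.Perm.sign π : ℤ) : ℚ) * AA e e' := by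
  unfold AA
  rw [← Matrix.det_permute']
  rfl

theorem AA_post {n m q : ℕ} (p : Fin n → Fin m) (hp : Function.Injective p) (e e' : Fin q → Fin n) :
    AA (p ∘ e) (p ∘ e') = AA e e' := by
  unfold AA
  simp [hp.eq_iff]

theorem AA_cons {n q : ℕ} (e : Fin (q+1) → Fin n) (j : Fin n) (e' : Fin q → Fin n) :
    AA e (Fin.cons j e') = ∑ i : Fin (q+1), (-1)^(i:ℕ) * (if j = e i then 1 else 0) *
      AA (e ∘ i.succAbove) e' := by
  unfold AA
  rw [Matrix.det_succ_row_zero]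
  rfl

theorem pc_inj {n q : ℕ} (b : Fin n → ℤ) {e : Fin q → Fin n} (he : Function.Injective e) (r : V q) :
    Function.Injective (pc b e r) := by
  intro x y h
  funext i
  have h1 := congrFun h (e i)
  rw [pc_apply, pc_apply] at h1
  have key : ∀ x : V q, (∑ j, if xor (x j) (r j) ∧ e j = e i then (1:ℤ) else 0) = if xor (x i) (r i) then 1 else 0 := by
    intro x
    rw [Finset.sum_eq_single i]
    · simp
    · intro j _ hj
      simp [he.ne hj]
    · simp
  rw [key, key] at h1
  cases hx : x i <;> cases hy : y i <;> cases hr : r i <;> simp_all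

theorem coef_inj {n q : ℕ} {w : V q → Fin n → ℤ} {b : Fin n → ℤ} {e' : Fin q → Fin n}
    (h : coef w b e' ≠ 0) : Function.Injective w := by
  obtain ⟨e, r, rfl, h2⟩ := coef_form h
  exact pc_inj b (AA_inj h2).1 r

theorem coef_eq_zero_of_not_inj {n q : ℕ} {w : V q → Fin n → ℤ} {b : Fin n → ℤ} {e' : Fin q → Fin n}
    (h : ¬ Function.Injective w) : coef w b e' = 0 := by
  by_contra h2; exact h (coef_inj h2)

theorem coef_target_inj {n q : ℕ} {w : V q → Fin n → ℤ} {b : Fin n → ℤ} {e' : Fin q → Fin n}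
    (h : coef w b e' ≠ 0) : Function.Injective e' := by
  obtain ⟨e, r, rfl, h2⟩ := coef_form h
  exact (AA_inj h2).2

theorem coef_comp_right {n q : ℕ} (w : V q → Fin n → ℤ) (b : Fin n → ℤ) (e' : Fin q → Fin n)
    (π : Equiv.Perm (Fin q)) :
    coef w b (e' ∘ π) = ((Equiv.Perm.sign π : ℤ) : ℚ) * coef w b e' := by
  unfold coef
  rw [Finset.mul_sum]
  refine Finset.sum_congr rfl fun e _ => ?_
  rw [Finset.mul_sum]
  refine Finset.sum_congr rfl fun r _ => ?_
  rw [AA_comp_right]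
  split_ifs <;> ring

theorem sg_perm {q : ℕ} (r : V q) (π : Equiv.Perm (Fin q)) : sg (r ∘ π) = sg r := by
  unfold sg
  exact Equiv.prod_comp π (fun i => if r i then (-1:ℚ) else 1)

theorem pc_perm {n q : ℕ} (b : Fin n → ℤ) (e : Fin q → Fin n) (r x : V q) (π : Equiv.Perm (Fin q)) :
    pc b (e ∘ π) (r ∘ π) (x ∘ π) = pc b e r x := by
  unfold pc
  congr 1
  exact Equiv.sum_comp π (fun i => if xor (x i) (r i) then (Pi.single (e i) (1:ℤ) : Fin n → ℤ) else 0)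

theorem coef_dom_perm {n q : ℕ} (w : V q → Fin n → ℤ) (b : Fin n → ℤ) (e' : Fin q → Fin n)
    (π : Equiv.Perm (Fin q)) :
    coef (fun x => w (x ∘ π)) b e' = ((Equiv.Perm.sign π : ℤ) : ℚ) * coef w b e' := by
  have key : ∀ (w : V q → Fin n → ℤ) (π : Equiv.Perm (Fin q)), coef w b e' ≠ 0 →
      coef (fun x => w (x ∘ π)) b e' = ((Equiv.Perm.sign π : ℤ) : ℚ) * coef w b e' := by
    intro w π h
    obtain ⟨e, r, rfl, -⟩ := coef_form h
    have : (fun x => pc b e r (x ∘ π)) = pc b (e ∘ π.symm) (r ∘ π.symm) := by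
      funext x
      rw [← pc_perm b (e ∘ π.symm) (r ∘ π.symm) x π]
      congr 1
      · funext i; simp
      · funext i; simp
    rw [this, coef_pc, coef_pc, sg_perm, AA_comp_left]
    simp
    ring
  by_cases h : coef w b e' = 0
  · rw [h, mul_zero]
    by_contra h2
    have := key _ π.symm h2
    simp only [Function.comp_assoc, Equiv.symm_comp_self, Function.comp_id] at this
    rw [h] at this
    rcases mul_eq_zero.1 this.symm with h3 | h3
    · simp at h3
    · exact h2 h3
  · exact key w π h

theorem sg_xor {q : ℕ} (r r' : V q) : sg (fun i => xor (r i) (r' i)) = sg r * sg r' := by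
  unfold sg
  rw [← Finset.prod_mul_distrib]
  refine Finset.prod_congr rfl fun i _ => ?_
  cases hr : r i <;> cases hr' : r' i <;> simp [hr, hr']

theorem coef_dom_xor {n q : ℕ} (w : V q → Fin n → ℤ) (b : Fin n → ℤ) (e' : Fin q → Fin n)
    (r : V q) :
    coef (fun x => w (fun i => xor (x i) (r i))) b e' = sg r * coef w b e' := by
  have key : ∀ (w : V q → Fin n → ℤ), coef w b e' ≠ 0 →
      coef (fun x => w (fun i => xor (x i) (r i))) b e' = sg r * coef w b e' := by
    intro w h
    obtain ⟨e, r', rfl, -⟩ := coef_form h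
    have : (fun x => pc b e r' (fun i => xor (x i) (r i))) = pc b e (fun i => xor (r i) (r' i)) := by
      funext x
      simp [pc]
    rw [this, coef_pc, coef_pc, sg_xor]
    simp
    ring
  by_cases h : coef w b e' = 0
  · rw [h, mul_zero]
    by_contra h2
    have := key _ h2
    simp only [Bool.xor_assoc, Bool.xor_self, Bool.xor_false] at this
    rw [h] at this
    rcases mul_eq_zero.1 this.symm with h3 | h3
    · unfold sg at h3
      rw [Finset.prod_eq_zero_iff] at h3
      obtain ⟨i, _, hi⟩ := h3
      split_ifs at hi <;> norm_num at hi
    · exact h2 h3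
  · exact key w h

end CL

namespace CL

theorem near_unit {n : ℕ} {y z : Fin n → ℤ} (h : Near y z) (hne : y ≠ z) :
    ∃ j s, (s = 1 ∨ s = -1) ∧ z = y + Pi.single j s := by
  obtain ⟨j, hj⟩ := Function.ne_iff.1 hne
  refine ⟨j, z j - y j, ?_⟩
  unfold Near at h
  rw [← Finset.add_sum_erase _ _ (Finset.mem_univ j)] at h
  have h1 : 1 ≤ |y j - z j| := Int.one_le_abs (sub_ne_zero.2 hj)
  have h0 : 0 ≤ ∑ i ∈ Finset.univ.erase j, |y i - z i| := Finset.sum_nonneg fun i _ => abs_nonneg _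
  have h2 : ∑ i ∈ Finset.univ.erase j, |y i - z i| = 0 := by linarith
  have h3 : |y j - z j| = 1 := by linarith
  constructor
  · rcases abs_eq (by norm_num : (0:ℤ) ≤ 1) |>.1 h3 with h | h
    · right; linarith
    · left; linarith
  · funext k
    by_cases hk : k = j
    · subst hk; simp
    · rw [Finset.sum_eq_zero_iff_of_nonneg (fun i _ => abs_nonneg _)] at h2
      have := h2 k (by simp [hk])
      rw [abs_eq_zero] at this
      simp [hk]
      linarith

theorem square {n : ℕ} {p z : Fin n → ℤ} {i j : Fin n} {s t : ℤ} (hs : s = 1 ∨ s = -1)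
    (ht : t = 1 ∨ t = -1) (h1 : Near (p + Pi.single i s) z) (h2 : Near (p + Pi.single j t) z)
    (hne : z ≠ p) (hst : p + Pi.single i s ≠ p + Pi.single j t)
    (h1' : p + Pi.single i s ≠ z) (h2' : p + Pi.single j t ≠ z) :
    i ≠ j ∧ z = p + Pi.single i s + Pi.single j t := by
  obtain ⟨k, u, hu, hz1⟩ := near_unit h1 h1'
  obtain ⟨l, v, hv, hz2⟩ := near_unit h2 h2'
  have heq : (p + Pi.single i s + Pi.single k u) = (p + Pi.single j t + Pi.single l v) := by
    rw [← hz1, hz2]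
  have hi := congrFun heq i
  have hj := congrFun heq j
  have e1 : k = i → u = -s → False := by
    rintro rfl rfl
    apply hne; rw [hz1, add_assoc, ← Pi.single_add]; simp
  have e2 : l = j → v = -t → False := by
    rintro rfl rfl
    apply hne; rw [hz2, add_assoc, ← Pi.single_add]; simp
  have e3 : i = j → s = t → False := by
    rintro rfl rfl
    exact hst rfl
  have e4 : i ≠ j ∧ k = j ∧ u = t := by
    simp only [Pi.add_apply, Pi.single_apply, if_true] at hi hj
    grind
  obtain ⟨a1, rfl, rfl⟩ := e4
  exact ⟨a1, hz1⟩

theorem sum_upd {n q : ℕ} (g : Fin q → Fin n → ℤ) (x : V q) (i : Fin q) (h : x i = true) :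
    (∑ k, if x k then g k else 0) =
      (∑ k, if (Function.update x i false) k then g k else 0) + g i := by
  rw [← Finset.add_sum_erase _ _ (Finset.mem_univ i),
    ← Finset.add_sum_erase (f := fun k => if (Function.update x i false) k then g k else 0) _ (Finset.mem_univ i)]
  simp only [h, Function.update_self, if_true]
  rw [Finset.sum_congr rfl (g := fun k => if (Function.update x i false) k then g k else 0)]
  · simp [add_comm]
  · intro k hk
    rw [Function.update_of_ne (Finset.ne_of_mem_erase hk)]

theorem near_symm {n : ℕ} {y z : Fin n → ℤ} (h : Near y z) : Near z y := by
  unfold Near at *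
  simpa only [abs_sub_comm] using h

theorem upd_ne {q : ℕ} (x : V q) (i : Fin q) (s : Bool) (h : x i ≠ s) : x ≠ Function.update x i s := by
  intro h2
  have := congrFun h2 i
  simp at this
  exact h this

theorem structure_aux {n q : ℕ} (w : V q → Fin n → ℤ) (hw : Step w) (hinj : Function.Injective w) :
    ∃ (e : Fin q → Fin n) (s : Fin q → ℤ), (∀ i, s i = 1 ∨ s i = -1) ∧
      ∀ x, w x = w (fun _ => false) + ∑ i, if x i then Pi.single (e i) (s i) else 0 := by
  have h0 : ∀ i : Fin q, ∃ j s, (s = 1 ∨ s = -1) ∧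
      w (Function.update (fun _ => false) i true) = w (fun _ => false) + Pi.single j s := fun i =>
    near_unit (hw _ _ _) (hinj.ne (upd_ne _ _ _ (by simp)))
  choose e s hs he using h0
  refine ⟨e, s, hs, ?_⟩
  suffices H : ∀ N, ∀ x : V q, (Finset.univ.filter fun i => x i = true).card = N →
      w x = w (fun _ => false) + ∑ i, if x i then Pi.single (e i) (s i) else 0 from
    fun x => H _ x rfl
  intro N
  induction N using Nat.strong_induction_on with
  | _ N ih =>
  intro x hx
  have hlt : ∀ (x : V q) i, x i = true → (Finset.univ.filter fun k => (Function.update x i false) k = true).card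
      < (Finset.univ.filter fun k => x k = true).card := by
    intro x i hi
    apply Finset.card_lt_card
    rw [Finset.ssubset_iff_of_subset]
    · exact ⟨i, by simp [hi], by simp⟩
    · intro k
      by_cases hk : k = i
      · subst hk; simp
      · simp [Function.update_of_ne hk]
  by_cases hz : ∃ i, x i = true
  · obtain ⟨i, hi⟩ := hz
    by_cases hz2 : ∃ j, j ≠ i ∧ x j = true
    · obtain ⟨j, hji, hj⟩ := hz2
      have hj' : (Function.update x i false) j = true := by rw [Function.update_of_ne hji]; exact hj
      have hi' : (Function.update x j false) i = true := by rw [Function.update_of_ne hji.symm]; exact hi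
      have hcomm : Function.update (Function.update x j false) i false = Function.update (Function.update x i false) j false :=
        Function.update_comm hji.symm _ _ _ |>.symm
      have E1 := ih _ (hx ▸ hlt x i hi) _ rfl
      have E2 := ih _ (hx ▸ hlt x j hj) _ rfl
      have E3 := ih _ (hx ▸ (hlt _ j hj').trans (hlt x i hi)) _ rfl
      rw [sum_upd _ _ _ hj', ← add_assoc, ← E3] at E1
      rw [sum_upd _ _ _ hi', hcomm, ← add_assoc, ← E3] at E2
      have sq := square (p := w (Function.update (Function.update x i false) j false)) (z := w x)
        (i := e j) (j := e i) (s := s j) (t := s i) (hs j) (hs i)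
        (by rw [← E1]; exact near_symm (hw _ _ _))
        (by rw [← E2]; exact near_symm (hw _ _ _))
        (by
          apply hinj.ne; intro h; have := congrFun h j; simp [hj] at this)
        (by
          rw [← E1, ← E2]
          apply hinj.ne; intro h; have := congrFun h j; simp [hj, hji] at this)
        (by
          rw [← E1]
          apply hinj.ne; intro h; have := congrFun h i; simp [hi] at this)
        (by
          rw [← E2]
          apply hinj.ne; intro h; have := congrFun h j; simp [hj] at this)
      rw [sq.2, E3, sum_upd _ x i hi, sum_upd _ _ j hj']
      abel
    · push Not at hz2
      have : x = Function.update (fun _ => false) i true := by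
        funext k
        by_cases hk : k = i
        · subst hk; simp [hi]
        · simp [hk, hz2 k hk]
      rw [this, he i]
      congr 1
      rw [Finset.sum_eq_single i]
      · simp
      · intro k _ hk; simp [hk]
      · simp
  · push Not at hz
    have : x = fun _ => false := by
      funext k; simpa using hz k
    rw [this]; simp

theorem structure_pc {n q : ℕ} (w : V q → Fin n → ℤ) (hw : Step w) (hinj : Function.Injective w) :
    ∃ (b : Fin n → ℤ) (e : Fin q → Fin n) (r : V q), Function.Injective e ∧ w = pc b e r := by
  obtain ⟨e, s, hs, h⟩ := structure_aux w hw hinj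
  have hform : w = pc (w (fun _ => false) - ∑ i, if decide (s i = -1) = true then (Pi.single (e i) (1:ℤ) : Fin n → ℤ) else 0) e (fun i => decide (s i = -1)) := by
    funext x
    rw [h x]
    unfold pc
    rw [sub_add, ← Finset.sum_sub_distrib, sub_eq_add_neg, ← Finset.sum_neg_distrib]
    congr 1
    refine Finset.sum_congr rfl fun i _ => ?_
    rcases hs i with h1 | h1 <;> cases hx : x i <;> simp [h1, Pi.single_neg]
  refine ⟨_, e, _, ?_, hform⟩
  intro i j hij
  by_contra hne
  have key : ∀ k, w (Function.update (fun _ => false) k true) = w (fun _ => false) + Pi.single (e k) (s k) := by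
    intro k
    rw [h]
    congr 1
    rw [Finset.sum_eq_single k]
    · simp
    · intro l _ hk; simp [hk]
    · simp
  have hd : w (Function.update (fun _ => false) i true) ≠ w (Function.update (fun _ => false) j true) := by
    apply hinj.ne
    intro h
    have := congrFun h i
    simp [hne] at this
  have : s i = - s j := by
    rw [key, key, hij] at hd
    rcases hs i with h1 | h1 <;> rcases hs j with h2 | h2 <;> simp [h1, h2] at hd ⊢
  have h3 := h (Function.update (Function.update (fun _ => false) i true) j true)
  rw [sum_upd _ _ j (by simp), sum_upd _ _ i (by simp [hne])] at h3
  have h4 : Function.update (Function.update (Function.update (Function.update (fun _ => false) i true) j true) j false) i false = (fun _ : Fin q => false) := by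
    funext k
    by_cases h1 : k = i <;> by_cases h2 : k = j <;> simp [h1, h2, Function.update_apply]
  rw [h4, this, hij] at h3
  simp [Pi.single_neg] at h3
  have := congrFun (hinj h3) j
  simp at this

end CL

namespace CL

def bd {n q : ℕ} (Φ : (V q → Fin n → ℤ) → ℚ) (u : V (q+1) → Fin n → ℤ) : ℚ :=
  ∑ i : Fin (q+1), (-1)^(i:ℕ) * (Φ (fun x => u (dl i true x)) - Φ (fun x => u (dl i false x)))

def Main (q n : ℕ) : Prop := ∀ u : V (q+1) → Fin n → ℤ, Step u → ∀ b (e' : Fin q → Fin n),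
  ∑ j : Fin n, (coef u (b - Pi.single j 1) (Fin.cons j e') - coef u b (Fin.cons j e'))
    = bd (fun w => coef w b e') u

theorem dl_same {q : ℕ} (i : Fin (q+1)) (s : Bool) (x : V q) : dl i s x i = s := by
  simp [dl]

theorem dl_above {q : ℕ} (i : Fin (q+1)) (s : Bool) (x : V q) (k : Fin q) :
    dl i s x (i.succAbove k) = x k := by
  simp [dl]

theorem dl_dl {q : ℕ} (i : Fin (q+2)) (j : Fin (q+1)) (s t : Bool) (x : V q) :
    dl i s (dl j t x) = dl (i.succAbove j) t (dl (j.predAbove i) s x) := by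
  funext k
  rcases Fin.eq_self_or_eq_succAbove i k with rfl | ⟨k, rfl⟩
  · rw [dl_same]
    conv_rhs => rw [← Fin.succAbove_succAbove_predAbove k j]
    rw [Fin.succAbove_succAbove_predAbove k j, ]
    conv_rhs => 
      arg 4
      rw [← Fin.succAbove_succAbove_predAbove k j]
    rw [dl_above, dl_same]
  · rw [dl_above]
    rcases Fin.eq_self_or_eq_succAbove j k with rfl | ⟨k, rfl⟩
    · rw [dl_same, dl_same]
    · rw [dl_above, ← Fin.succAbove_succAbove_succAbove_predAbove, dl_above, dl_above]

theorem bd_bd {n q : ℕ} (Φ : (V q → Fin n → ℤ) → ℚ) (u : V (q+2) → Fin n → ℤ) :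
    bd (fun v => bd Φ v) u = 0 := by
  unfold bd
  simp only [← Finset.sum_sub_distrib, Finset.mul_sum]
  rw [← Finset.sum_product']
  refine Finset.sum_involution (fun p _ => (p.1.succAbove p.2, p.2.predAbove p.1)) ?_ ?_ ?_ ?_
  · rintro ⟨i, j⟩ _
    simp only
    have h := Fin.neg_one_pow_succAbove_add_predAbove (R := ℚ) i j
    rw [pow_add, pow_add] at h
    simp only [dl_dl i j]
    linear_combination (Φ (fun x => u (dl (i.succAbove j) true (dl (j.predAbove i) true x)))
     - Φ (fun x => u (dl (i.succAbove j) true (dl (j.predAbove i) false x)))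
     - Φ (fun x => u (dl (i.succAbove j) false (dl (j.predAbove i) true x)))
     + Φ (fun x => u (dl (i.succAbove j) false (dl (j.predAbove i) false x)))) * h
  · rintro ⟨i, j⟩ _ _ h
    exact Fin.succAbove_ne i j (Prod.ext_iff.1 h).1
  · simp
  · rintro ⟨i, j⟩ _
    simp [Fin.succAbove_succAbove_predAbove, Fin.predAbove_predAbove_succAbove]

theorem pc_dl {n q : ℕ} (b : Fin n → ℤ) (e : Fin (q+1) → Fin n) (r : V (q+1)) (i : Fin (q+1)) (s : Bool) :
    (fun x => pc b e r (dl i s x)) =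
      pc (if xor s (r i) then b + Pi.single (e i) 1 else b) (e ∘ i.succAbove) (r ∘ i.succAbove) := by
  funext x
  unfold pc
  rw [Fin.sum_univ_succAbove _ i]
  simp only [dl_same, dl_above, Function.comp]
  split_ifs
  · rw [add_assoc]
  · simp

theorem sg_above {q : ℕ} (r : V (q+1)) (i : Fin (q+1)) :
    sg r = (if r i then -1 else 1) * sg (r ∘ i.succAbove) := by
  unfold sg
  rw [Fin.prod_univ_succAbove _ i]
  rfl

theorem ite_one_mul (P : Prop) [Decidable P] (a : ℚ) :
    (if P then a else 0) = (if P then 1 else 0) * a := by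
  split_ifs <;> simp

theorem main_pc {n q : ℕ} (b₀ : Fin n → ℤ) (e : Fin (q+1) → Fin n) (r : V (q+1)) (b) (e' : Fin q → Fin n) :
    ∑ j : Fin n, (coef (pc b₀ e r) (b - Pi.single j 1) (Fin.cons j e') - coef (pc b₀ e r) b (Fin.cons j e'))
    = bd (fun w => coef w b e') (pc b₀ e r) := by
  unfold bd
  simp only [pc_dl, coef_pc, AA_cons]
  have : ∀ j : Fin n, ((if b₀ = b - Pi.single j 1 then sg r * ∑ i : Fin (q+1), (-1)^(i:ℕ) * (if j = e i then 1 else 0) *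
      AA (e ∘ i.succAbove) e' else 0) - (if b₀ = b then sg r * ∑ i : Fin (q+1), (-1)^(i:ℕ) * (if j = e i then 1 else 0) *
      AA (e ∘ i.succAbove) e' else 0)) = ∑ i : Fin (q+1), if j = e i then (((if b₀ = b - Pi.single j 1 then 1 else 0) - (if b₀ = b then 1 else 0)) * sg r * ((-1)^(i:ℕ) * AA (e ∘ i.succAbove) e')) else 0 := by
    intro j
    rw [ite_one_mul (b₀ = b - Pi.single j 1), ite_one_mul (b₀ = b), ← sub_mul, ← mul_assoc,
      Finset.mul_sum]
    refine Finset.sum_congr rfl fun i _ => ?_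
    by_cases h : j = e i
    · simp only [h, if_true]; ring
    · simp [h]
  rw [Finset.sum_congr rfl fun j _ => this j, Finset.sum_comm]
  refine Finset.sum_congr rfl fun i _ => ?_
  rw [Finset.sum_ite_eq' Finset.univ (e i), if_pos (Finset.mem_univ _), sg_above r i]
  have e1 : (b₀ = b - Pi.single (e i) 1) ↔ (b₀ + Pi.single (e i) 1 = b) := eq_sub_iff_add_eq
  simp only [e1]
  cases h : r i
  · simp
    split_ifs <;> ring
  · simp
    split_ifs <;> ring

def Star (q : ℕ) : Prop := ∀ w : V (q+1) → Fin q → ℤ, Step w → ∀ c,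
  bd (fun v => coef v c id) w = 0

theorem step_dl {n q : ℕ} {u : V (q+1) → Fin n → ℤ} (hu : Step u) (i : Fin (q+1)) (s : Bool) :
    Step (fun x => u (dl i s x)) := by
  intro x k t
  have : dl i s (Function.update x k t) = Function.update (dl i s x) (i.succAbove k) t := by
    funext l
    rcases Fin.eq_self_or_eq_succAbove i l with rfl | ⟨l, rfl⟩
    · rw [dl_same, Function.update_of_ne (Fin.succAbove_ne _ _).symm, dl_same]
    · rw [dl_above]
      by_cases h : l = k
      · subst h; simp
      · rw [Function.update_of_ne h, Function.update_of_ne (by simpa using h), dl_above]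
  simp only [this]
  exact hu _ _ _

theorem near_proj {n q : ℕ} {e : Fin q → Fin n} (he : Function.Injective e) {y z : Fin n → ℤ}
    (h : Near y z) : Near (y ∘ e) (z ∘ e) := by
  unfold Near at *
  refine le_trans ?_ h
  have : ∑ i, |(y ∘ e) i - (z ∘ e) i| = ∑ i ∈ Finset.univ.map ⟨e, he⟩, |y i - z i| := by
    simp
  rw [this]
  exact Finset.sum_le_sum_of_subset_of_nonneg (Finset.subset_univ _) (fun i _ _ => abs_nonneg _)

theorem pc_proj {n q p : ℕ} {e' : Fin q → Fin n} (he : Function.Injective e') (b : Fin n → ℤ)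
    (e : Fin p → Fin q) (r x : V p) : pc b (e' ∘ e) r x ∘ e' = pc (b ∘ e') e r x := by
  funext k
  simp only [Function.comp, pc_apply, he.eq_iff]

theorem R2 {n q : ℕ} {w : V q → Fin n → ℤ} {b : Fin n → ℤ} {e' : Fin q → Fin n}
    (h : coef w b e' ≠ 0) : coef (fun x => w x ∘ e') (b ∘ e') id = coef w b e' := by
  obtain ⟨e, r, rfl, hA⟩ := coef_form h
  have he' := (AA_inj hA).2
  obtain ⟨π, rfl⟩ := AA_perm hA
  simp only [pc_proj he']
  have : (fun x => pc (b ∘ e') π r x) = pc (b ∘ e') π r := rfl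
  rw [this, coef_pc, coef_pc]
  have := AA_post e' he' π id
  simp at this
  simp [this]

theorem R1 {n q : ℕ} {w : V q → Fin n → ℤ} (hw : Step w) {c : Fin q → ℤ} {e' : Fin q → Fin n}
    (he' : Function.Injective e')
    (h : coef (fun x => w x ∘ e') c id ≠ 0) :
    ∃ (b : Fin n → ℤ) (ee : Fin q → Fin q) (r : V q), b ∘ e' = c ∧ w = pc b (e' ∘ ee) r ∧ coef w b e' = coef (fun x => w x ∘ e') c id := by
  have hinjp := coef_inj h
  have hinj : Function.Injective w := fun x y hxy => hinjp (by simp [hxy])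
  obtain ⟨b, e, r, he, rfl⟩ := structure_pc w hw hinj
  have hr : ∀ i, ∃ k, e' k = e i := by
    intro i
    by_contra hno
    push Not at hno
    have : (pc b e r (Function.update r i (!(r i)))) ∘ e' = (pc b e r r) ∘ e' := by
      funext k
      simp only [Function.comp, pc_apply]
      congr 1
      refine Finset.sum_congr rfl fun l _ => ?_
      by_cases hl : l = i
      · subst hl; simp [(hno k).symm]
      · simp [Function.update_of_ne hl]
    have := congrFun (hinjp this) i
    simp at this
  choose ee hee using hr
  obtain rfl : e' ∘ ee = e := funext hee
  simp only [pc_proj he'] at h ⊢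
  have e0 : (fun x => pc (b ∘ e') ee r x) = pc (b ∘ e') ee r := rfl
  rw [e0] at h ⊢
  rw [coef_pc] at h
  split_ifs at h with hb
  · refine ⟨b, ee, r, hb, rfl, ?_⟩
    rw [coef_pc, coef_pc]
    have := AA_post e' he' ee id
    simp at this
    simp [this, hb]
  · exact absurd rfl h

theorem noninj {q : ℕ} (hS : Star q) {n : ℕ} (u : V (q+1) → Fin n → ℤ) (hu : Step u)
    (hni : ¬ Function.Injective u) (b) (e' : Fin q → Fin n) :
    bd (fun w => coef w b e') u = 0 := by
  by_cases he' : Function.Injective e'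
  swap
  · unfold bd
    apply Finset.sum_eq_zero
    intro i _
    have : ∀ w : V q → Fin n → ℤ, coef w b e' = 0 := by
      intro w; by_contra h; exact he' (coef_target_inj h)
    simp [this]
  have hproj : Step (fun x => u x ∘ e') := fun x i s => near_proj he' (hu x i s)
  have h0 := hS _ hproj (b ∘ e')
  by_cases hall : ∀ i s, coef (fun x => u (dl i s x)) b e' = coef (fun x => u (dl i s x) ∘ e') (b ∘ e') id
  · rw [← h0]
    unfold bd
    refine Finset.sum_congr rfl fun i _ => ?_
    simp only [hall]
  push Not at hall
  obtain ⟨i, s, his⟩ := hall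
  have z0 : coef (fun x => u (dl i s x)) b e' = 0 := by
    by_contra h; exact his (R2 h).symm
  rw [z0] at his
  obtain ⟨b₂, ee, r, hb2, hw2, hc2⟩ := R1 (step_dl hu i s) he' his.symm
  have hbne : b₂ ≠ b := by
    rintro rfl
    rw [hc2] at z0; exact his z0.symm
  by_cases hz : ∀ i s, coef (fun x => u (dl i s x)) b e' = 0
  · unfold bd
    apply Finset.sum_eq_zero
    intro i _
    simp [hz]
  push Not at hz
  obtain ⟨i', s', his'⟩ := hz
  exfalso
  apply hni
  obtain ⟨e3, r3, hw3, hA3⟩ := coef_form his'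
  obtain ⟨π, rfl⟩ := AA_perm hA3
  obtain ⟨k, hk⟩ := Function.ne_iff.1 hbne
  have hkr : ∀ l, e' l ≠ k := by
    rintro l rfl
    exact hk (congrFun hb2 l)
  have hpk : ∀ (b : Fin n → ℤ) (ee : Fin q → Fin q) (r x), pc b (e' ∘ ee) r x k = b k := by
    intro b ee r x
    rw [pc_apply]
    simp [hkr]
  have c2 : ∀ x, u (dl i s x) k = b₂ k := fun x => by
    rw [show u (dl i s x) = pc b₂ (e' ∘ ee) r x from congrFun hw2 x, hpk]
  have c3 : ∀ x, u (dl i' s' x) k = b k := fun x => by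
    rw [show u (dl i' s' x) = pc b (e' ∘ π) r3 x from congrFun hw3 x, hpk]
  have hface : ∀ (i : Fin (q+1)) (s) (y : V (q+1)), y i = s → ∃ x, y = dl i s x := by
    intro i s y hy
    refine ⟨fun k => y (i.succAbove k), ?_⟩
    funext l
    rcases Fin.eq_self_or_eq_succAbove i l with rfl | ⟨l, rfl⟩
    · rw [dl_same, hy]
    · rw [dl_above]
  have hopp : ∀ y : V (q+1), y i = s → y i' = s' → False := by
    intro y h1 h2
    obtain ⟨x, rfl⟩ := hface i s y h1
    obtain ⟨x', hx'⟩ := hface i' s' _ h2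
    have := c2 x
    rw [hx', c3 x'] at this
    exact hk this.symm
  have hii : i = i' := by
    by_contra hne
    exact hopp (Function.update (fun _ => s') i s) (by simp) (by simp [Ne.symm hne])
  subst hii
  have hss : s' = !s := by
    by_contra hne
    have : s' = s := by cases s <;> cases s' <;> simp_all
    subst this
    exact hopp (fun _ => s') rfl rfl
  subst hss
  have inj2 : Function.Injective (fun x => u (dl i s x)) := fun x y hxy => coef_inj (hc2 ▸ his.symm) hxy
  have inj3 := coef_inj his'
  have hcoord : ∀ y, (y i = s ∧ u y k = b₂ k) ∨ (y i = !s ∧ u y k = b k) := by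
    intro y
    by_cases hy : y i = s
    · obtain ⟨x, rfl⟩ := hface i s y hy
      exact Or.inl ⟨hy, c2 x⟩
    · have hy' : y i = !s := by cases s <;> simp_all
      obtain ⟨x, rfl⟩ := hface i _ y hy'
      exact Or.inr ⟨hy', c3 x⟩
  intro y z hyz
  rcases hcoord y with ⟨h1, h2⟩ | ⟨h1, h2⟩ <;> rcases hcoord z with ⟨h3, h4⟩ | ⟨h3, h4⟩
  · obtain ⟨x, rfl⟩ := hface _ _ _ h1
    obtain ⟨x', rfl⟩ := hface _ _ _ h3
    rw [inj2 hyz]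
  · rw [hyz, h4] at h2; exact absurd h2.symm hk
  · rw [hyz, h4] at h2; exact absurd h2 hk
  · obtain ⟨x, rfl⟩ := hface _ _ _ h1
    obtain ⟨x', rfl⟩ := hface _ _ _ h3
    rw [inj3 hyz]

theorem main_of_star {q : ℕ} (hS : Star q) (n : ℕ) : Main q n := by
  intro u hu b e'
  by_cases hi : Function.Injective u
  · obtain ⟨b₀, e, r, -, rfl⟩ := structure_pc u hu hi
    exact main_pc b₀ e r b e'
  · rw [noninj hS u hu hi]
    apply Finset.sum_eq_zero
    intro j _
    rw [coef_eq_zero_of_not_inj hi, coef_eq_zero_of_not_inj hi, sub_zero]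

theorem star_zero : Star 0 := by
  intro w _ c
  unfold bd
  apply Finset.sum_eq_zero
  intro i _
  have : (fun x => w (dl i true x)) = (fun x => w (dl i false x)) := Subsingleton.elim _ _
  rw [this, sub_self, mul_zero]

theorem star_succ {q : ℕ} (hM : Main q (q+1)) : Star (q+1) := by
  intro w hw c
  have hstep : ∀ c, bd (fun v => coef v (c - Pi.single 0 1) id) w = bd (fun v => coef v c id) w := by
    intro c
    have hb := bd_bd (fun v => coef v c (Fin.succ : Fin q → Fin (q+1))) w
    have hcons : (Fin.cons 0 Fin.succ : Fin (q+1) → Fin (q+1)) = id := by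
      funext k; refine Fin.cases ?_ (fun k => ?_) k <;> simp
    have hMM : ∀ v : V (q+1) → Fin (q+1) → ℤ, Step v →
        bd (fun v => coef v c (Fin.succ : Fin q → Fin (q+1))) v =
        coef v (c - Pi.single 0 1) id - coef v c id := by
      intro v hv
      rw [← hM v hv c Fin.succ, Finset.sum_eq_single 0]
      · rw [hcons]
      · intro j _ hj
        have hn : ¬ Function.Injective (Fin.cons j Fin.succ : Fin (q+1) → Fin (q+1)) := by
          intro h
          obtain ⟨k, rfl⟩ := Fin.exists_succ_eq.2 hj
          have : (Fin.cons k.succ Fin.succ : Fin (q+1) → Fin (q+1)) 0 = (Fin.cons k.succ Fin.succ : Fin (q+1) → Fin (q+1)) k.succ := by simp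
          exact Fin.succ_ne_zero _ (h this).symm
        have : ∀ b, coef v b (Fin.cons j Fin.succ : Fin (q+1) → Fin (q+1)) = 0 := by
          intro b; by_contra h; exact hn (coef_target_inj h)
        rw [this, this, sub_zero]
      · simp
    have e1 : bd (fun v => bd (fun v => coef v c (Fin.succ : Fin q → Fin (q+1))) v) w =
        bd (fun v => coef v (c - Pi.single 0 1) id - coef v c id) w := by
      rw [bd]
      conv_rhs => rw [bd]
      refine Finset.sum_congr rfl fun i _ => ?_
      have h1 := hMM _ (step_dl hw i true)
      have h2 := hMM _ (step_dl hw i false)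
      beta_reduce
      rw [← h1, ← h2]
    rw [← sub_eq_zero, ← hb, e1]
    unfold bd
    rw [← Finset.sum_sub_distrib]
    refine Finset.sum_congr rfl fun i _ => ?_
    ring
  have hk : ∀ k : ℕ, bd (fun v => coef v (c - k • Pi.single 0 1) id) w = bd (fun v => coef v c id) w := by
    intro k
    induction k with
    | zero => simp
    | succ k ih => rw [← ih, ← hstep (c - k • Pi.single 0 1), succ_nsmul, sub_sub]
  have hfin : (Set.range w).Finite := Set.finite_range w
  have hinj : Function.Injective (fun k : ℕ => (c - k • Pi.single 0 1 : Fin (q+1) → ℤ)) := by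
    intro k l h
    have := congrFun h 0
    simpa using this
  obtain ⟨k, hk2⟩ : ∃ k : ℕ, (c - k • Pi.single 0 1 : Fin (q+1) → ℤ) ∉ Set.range w := by
    by_contra hno
    push Not at hno
    exact Set.infinite_range_of_injective hinj (hfin.subset (by rintro _ ⟨k, rfl⟩; exact hno k))
  rw [← hk k]
  unfold bd
  apply Finset.sum_eq_zero
  intro i _
  have : ∀ s, coef (fun x => w (dl i s x)) (c - k • Pi.single 0 1) id = 0 := by
    intro s
    by_contra h
    obtain ⟨e, r, he, -⟩ := coef_form h
    apply hk2
    exact ⟨dl i s r, by rw [show w (dl i s r) = _ from congrFun he r, pc_self]⟩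
  simp only [this, sub_zero, mul_zero]

theorem star_all (q : ℕ) : Star q := by
  induction q with
  | zero => exact star_zero
  | succ q ih => exact star_succ (main_of_star ih _)

theorem main_all (q n : ℕ) : Main q n := main_of_star (star_all q) n

end CL

namespace CL

def p0 {n q : ℕ} (b : Fin n → ℤ) (e : Fin q → Fin n) : V q → Fin n → ℤ := pc b e (fun _ => false)

def ins {n q : ℕ} (X : Finset (Fin n → ℤ)) (b : Fin n → ℤ) (e : Fin q → Fin n) : Prop :=
  ∀ x, p0 b e x ∈ X

instance {n q : ℕ} (X : Finset (Fin n → ℤ)) (b : Fin n → ℤ) (e : Fin q → Fin n) :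
    Decidable (ins X b e) := by unfold ins; infer_instance

def StepOn {n m : ℕ} (X : Finset (Fin n → ℤ)) (f : (Fin n → ℤ) → (Fin m → ℤ)) : Prop :=
  ∀ x ∈ X, ∀ y ∈ X, Near x y → Near (f x) (f y)

def Tq {n : ℕ} (X : Finset (Fin n → ℤ)) (f : (Fin n → ℤ) → (Fin n → ℤ)) (q : ℕ) : ℚ :=
  ∑ b ∈ X, ∑ e : Fin q → Fin n, if ins X b e then coef (fun x => f (p0 b e x)) b e else 0

def TT {n : ℕ} (N : ℕ) (X : Finset (Fin n → ℤ)) (f : (Fin n → ℤ) → (Fin n → ℤ)) : ℚ :=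
  ∑ q ∈ Finset.range N, (-1)^q / (q.factorial : ℚ) * Tq X f q

theorem pc_p0 {n q : ℕ} (b : Fin n → ℤ) (e : Fin q → Fin n) (r x : V q) :
    pc b e r x = p0 b e (fun i => xor (x i) (r i)) := by
  simp [p0, pc]

theorem p0_perm {n q : ℕ} (b : Fin n → ℤ) (e : Fin q → Fin n) (x : V q) (π : Equiv.Perm (Fin q)) :
    p0 b (e ∘ π) (x ∘ π) = p0 b e x := by
  unfold p0
  rw [← pc_perm b e _ x π]
  rfl

theorem p0_perm' {n q : ℕ} (b : Fin n → ℤ) (e : Fin q → Fin n) (x : V q) (π : Equiv.Perm (Fin q)) :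
    p0 b (e ∘ π.symm) x = p0 b e (x ∘ π) := by
  rw [← p0_perm b e (x ∘ π) π.symm]
  congr 1
  funext i; simp

theorem ins_perm {n q : ℕ} (X : Finset (Fin n → ℤ)) (b : Fin n → ℤ) (e : Fin q → Fin n)
    (π : Equiv.Perm (Fin q)) : ins X b (e ∘ π) ↔ ins X b e := by
  constructor
  · intro h x
    rw [← p0_perm b e x π]; exact h _
  · intro h x
    have := p0_perm' b e x π.symm
    rw [Equiv.symm_symm] at this
    rw [this]; exact h _

theorem ins_of_coef {n q : ℕ} {X : Finset (Fin n → ℤ)} {w : V q → Fin n → ℤ} {b : Fin n → ℤ}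
    {e : Fin q → Fin n} (h : coef w b e ≠ 0) (hw : ∀ x, w x ∈ X) : ins X b e := by
  obtain ⟨e2, r, rfl, hA⟩ := coef_form h
  obtain ⟨π, rfl⟩ := AA_perm hA
  rw [← ins_perm X b e π]
  intro x
  have := hw (fun i => xor (x i) (r i))
  rw [pc_p0] at this
  simpa [Bool.xor_assoc] using this

theorem ins_mem {n q : ℕ} {X : Finset (Fin n → ℤ)} {b : Fin n → ℤ}
    {e : Fin q → Fin n} (h : ins X b e) : b ∈ X := by
  have := h (fun _ => false)
  rwa [p0, pc_self] at this

theorem near_refl {n : ℕ} (y : Fin n → ℤ) : Near y y := by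
  simp [Near]

theorem step_p0 {n q : ℕ} (b : Fin n → ℤ) (e : Fin q → Fin n) : Step (p0 b e) := by
  intro x i s
  by_cases h : x i = s
  · rw [← h, Function.update_eq_self]; exact near_refl _
  have key : ∀ x : V q, x i = true → Near (p0 b e x) (p0 b e (Function.update x i false)) := by
    intro x hx
    have : p0 b e x = p0 b e (Function.update x i false) + Pi.single (e i) 1 := by
      unfold p0 pc
      simp only [Bool.xor_false]
      rw [sum_upd (fun k => Pi.single (e k) 1) x i hx, add_assoc]
    rw [this]
    unfold Near
    simp [Pi.single_apply, apply_ite abs]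
  cases hs : s
  · subst hs
    exact key x (by simpa using h)
  · subst hs
    have := key (Function.update x i true) (by simp)
    rw [Function.update_idem] at this
    have hx : Function.update x i false = x := by
      rw [Function.update_eq_self_iff]; simpa using Eq.symm (by simpa using h : x i = false)
    rw [hx] at this
    exact near_symm this

theorem step_comp {n m q : ℕ} {X : Finset (Fin n → ℤ)} {f : (Fin n → ℤ) → (Fin m → ℤ)}
    (hf : StepOn X f) {u : V q → Fin n → ℤ} (hu : Step u) (hX : ∀ x, u x ∈ X) :
    Step (fun x => f (u x)) := fun x i s => hf _ (hX _) _ (hX _) (hu x i s)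

theorem sign_sq {q : ℕ} (π : Equiv.Perm (Fin q)) :
    ((Equiv.Perm.sign π : ℤ) : ℚ) * ((Equiv.Perm.sign π : ℤ) : ℚ) = 1 := by
  rcases Int.units_eq_one_or (Equiv.Perm.sign π) with h | h <;> simp [h]

theorem funct {n m q : ℕ} {Y : Finset (Fin m → ℤ)} (u : V q → Fin m → ℤ) (hu : Step u)
    (hY : ∀ x, u x ∈ Y) (g : (Fin m → ℤ) → (Fin n → ℤ)) (b' : Fin n → ℤ) (e' : Fin q → Fin n) :
    (q.factorial : ℚ) * coef (fun x => g (u x)) b' e' =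
      ∑ b ∈ Y, ∑ e : Fin q → Fin m, if ins Y b e then
        coef u b e * coef (fun x => g (p0 b e x)) b' e' else 0 := by
  by_cases hi : Function.Injective u
  swap
  · have h2 : ¬ Function.Injective (fun x => g (u x)) := fun h => hi fun x y hxy => h (by simp [hxy])
    rw [coef_eq_zero_of_not_inj h2, mul_zero]
    symm
    apply Finset.sum_eq_zero; intro b _
    apply Finset.sum_eq_zero; intro e _
    rw [coef_eq_zero_of_not_inj hi]; simp
  obtain ⟨b, e, r, he, rfl⟩ := structure_pc u hu hi
  have hb : b ∈ Y := by have := hY r; rwa [pc_self] at this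
  have hins : ins Y b e := by
    intro x
    have := hY (fun i => xor (x i) (r i))
    rw [pc_p0] at this
    simpa [Bool.xor_assoc] using this
  rw [Finset.sum_eq_single b]
  rotate_left
  · intro b2 _ hne
    apply Finset.sum_eq_zero; intro e2 _
    rw [coef_pc, if_neg (Ne.symm hne)]; simp
  · exact fun h => absurd hb h
  simp only [coef_pc, if_true, pc_p0]
  rw [coef_dom_xor (fun x => g (p0 b e x))]
  have h1 : ∀ e2 : Fin q → Fin m, (if ins Y b e2 then sg r * AA e e2 * coef (fun x => g (p0 b e2 x)) b' e' else 0)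
    = ∑ π : Equiv.Perm (Fin q), if e2 = e ∘ π.symm then (if ins Y b e2 then sg r * ((Equiv.Perm.sign π : ℤ) : ℚ) * coef (fun x => g (p0 b e2 x)) b' e' else 0) else 0 := by
    intro e2
    rw [AA_leibniz]
    split_ifs
    · rw [Finset.mul_sum, Finset.sum_mul]
      refine Finset.sum_congr rfl fun π _ => ?_
      have : (e = e2 ∘ π) ↔ (e2 = e ∘ π.symm) := Equiv.eq_comp_symm π e2 e |>.symm.trans Iff.rfl |> fun h => by
        constructor
        · rintro rfl; funext i; simp
        · rintro rfl; funext i; simp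
      by_cases hh : e = e2 ∘ π
      · rw [if_pos hh, if_pos (this.1 hh)]
      · rw [if_neg hh, if_neg (fun h => hh (this.2 h))]; simp
    · simp
  rw [Finset.sum_congr rfl fun e2 _ => h1 e2, Finset.sum_comm]
  have h2 : ∀ π : Equiv.Perm (Fin q), (∑ e2 : Fin q → Fin m, if e2 = e ∘ π.symm then (if ins Y b e2 then sg r * ((Equiv.Perm.sign π : ℤ) : ℚ) * coef (fun x => g (p0 b e2 x)) b' e' else 0) else 0) = sg r * coef (fun x => g (p0 b e x)) b' e' := by
    intro π
    rw [Finset.sum_ite_eq' Finset.univ, if_pos (Finset.mem_univ _), if_pos ((ins_perm Y b e π.symm).2 hins)]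
    have : (fun x => g (p0 b (e ∘ π.symm) x)) = fun x => (fun x => g (p0 b e x)) (x ∘ π) := by
      funext x; rw [p0_perm']
    rw [this, coef_dom_perm (fun x => g (p0 b e x))]
    linear_combination (sg r * coef (fun x => g (p0 b e x)) b' e') * sign_sq π
  rw [Finset.sum_congr rfl fun π _ => h2 π]
  simp [Fintype.card_perm]

theorem sum4 {α β γ δ : Type*} (A : Finset α) (B : Finset β) (C : Finset γ) (D : Finset δ)
    (F : α → β → γ → δ → ℚ) :
    ∑ a ∈ A, ∑ b ∈ B, ∑ c ∈ C, ∑ d ∈ D, F a b c d = ∑ c ∈ C, ∑ d ∈ D, ∑ a ∈ A, ∑ b ∈ B, F a b c d := by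
  have h1 : ∀ a, ∑ b ∈ B, ∑ c ∈ C, ∑ d ∈ D, F a b c d = ∑ c ∈ C, ∑ d ∈ D, ∑ b ∈ B, F a b c d := by
    intro a
    rw [Finset.sum_comm]
    exact Finset.sum_congr rfl fun c _ => Finset.sum_comm
  rw [Finset.sum_congr rfl fun a _ => h1 a, Finset.sum_comm]
  exact Finset.sum_congr rfl fun c _ => Finset.sum_comm

theorem Tq_cyc {n m : ℕ} (q : ℕ) {X : Finset (Fin n → ℤ)} {Y : Finset (Fin m → ℤ)}
    {g : (Fin n → ℤ) → (Fin m → ℤ)} {h : (Fin m → ℤ) → (Fin n → ℤ)}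
    (hgXY : MapsInto X Y g) (hhYX : MapsInto Y X h) (hg : StepOn X g) (hh : StepOn Y h) :
    Tq Y (g ∘ h) q = Tq X (h ∘ g) q := by
  have hq : (q.factorial : ℚ) ≠ 0 := by exact_mod_cast q.factorial_ne_zero
  apply mul_left_cancel₀ hq
  have key : ∀ {n m : ℕ} {X : Finset (Fin n → ℤ)} {Y : Finset (Fin m → ℤ)}
    {g : (Fin n → ℤ) → (Fin m → ℤ)} {h : (Fin m → ℤ) → (Fin n → ℤ)}, MapsInto Y X h → StepOn Y h →
     (q.factorial : ℚ) * Tq Y (g ∘ h) q = ∑ b ∈ Y, ∑ e : Fin q → Fin m, ∑ b2 ∈ X, ∑ e2 : Fin q → Fin n,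
      if ins Y b e then (if ins X b2 e2 then coef (fun x => h (p0 b e x)) b2 e2 * coef (fun x => g (p0 b2 e2 x)) b e else 0) else 0 := by
    intro n m X Y g h hYX hh
    unfold Tq
    rw [Finset.mul_sum]
    refine Finset.sum_congr rfl fun b _ => ?_
    rw [Finset.mul_sum]
    refine Finset.sum_congr rfl fun e _ => ?_
    split_ifs with hi
    · exact funct (Y := X) (fun x => h (p0 b e x)) (step_comp hh (step_p0 b e) hi) (fun x => hYX _ (hi x)) g b e
    · simp
  rw [key hhYX hh, key hgXY hg]
  rw [sum4]
  refine Finset.sum_congr rfl fun b _ => Finset.sum_congr rfl fun e _ =>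
    Finset.sum_congr rfl fun b2 _ => Finset.sum_congr rfl fun e2 _ => ?_
  split_ifs
  · rw [mul_comm]
  all_goals rfl

theorem TT_cyc {n m : ℕ} (N : ℕ) {X : Finset (Fin n → ℤ)} {Y : Finset (Fin m → ℤ)}
    {g : (Fin n → ℤ) → (Fin m → ℤ)} {h : (Fin m → ℤ) → (Fin n → ℤ)}
    (hgXY : MapsInto X Y g) (hhYX : MapsInto Y X h) (hg : StepOn X g) (hh : StepOn Y h) :
    TT N Y (g ∘ h) = TT N X (h ∘ g) := by
  unfold TT
  refine Finset.sum_congr rfl fun q _ => ?_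
  rw [Tq_cyc q hgXY hhYX hg hh]

theorem TT_congr {n : ℕ} (N : ℕ) {X : Finset (Fin n → ℤ)}
    {f g : (Fin n → ℤ) → (Fin n → ℤ)} (h : ∀ x ∈ X, f x = g x) : TT N X f = TT N X g := by
  have key : ∀ q, Tq X f q = Tq X g q := by
    intro q
    unfold Tq
    refine Finset.sum_congr rfl fun b _ => Finset.sum_congr rfl fun e _ => ?_
    by_cases hi : ins X b e
    · rw [if_pos hi, if_pos hi]
      have : (fun x => f (p0 b e x)) = fun x => g (p0 b e x) := by
        funext x
        exact h _ (hi x)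
      rw [this]
    · rw [if_neg hi, if_neg hi]
  unfold TT
  exact Finset.sum_congr rfl fun q _ => by rw [key q]

end CL

namespace CL

def Hw {n q : ℕ} (f0 f1 : (Fin n → ℤ) → (Fin n → ℤ)) (b : Fin n → ℤ) (e : Fin q → Fin n) :
    V (q+1) → Fin n → ℤ := fun y => (if y 0 then f1 else f0) (p0 b e (fun k => y k.succ))

theorem step_Hw {n q : ℕ} {X : Finset (Fin n → ℤ)} {f0 f1 : (Fin n → ℤ) → (Fin n → ℤ)}
    (h0 : StepOn X f0) (h1 : StepOn X f1) (hN : ∀ x ∈ X, Near (f0 x) (f1 x))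
    {b : Fin n → ℤ} {e : Fin q → Fin n} (hi : ins X b e) : Step (Hw f0 f1 b e) := by
  intro x i s
  refine Fin.cases ?_ (fun k => ?_) i
  · have : ∀ k : Fin q, Function.update x 0 s k.succ = x k.succ := fun k => by
      simp [Function.update_apply]
    simp only [Hw, Function.update_self, this]
    have hh := hN _ (hi (fun k => x k.succ))
    cases x 0 <;> cases s
    · exact near_refl _
    · exact hh
    · exact near_symm hh
    · exact near_refl _
  · have h2 : (fun l : Fin q => Function.update x k.succ s l.succ) =
        Function.update (fun l : Fin q => x l.succ) k s := by
      funext l; simp [Function.update_apply]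
    have h3 : Function.update x k.succ s 0 = x 0 := by
      rw [Function.update_apply, if_neg (Fin.succ_ne_zero k).symm]
    simp only [Hw, h2, h3]
    have h4 := step_p0 b e (fun l => x l.succ) k s
    cases x 0
    · exact h0 _ (hi _) _ (hi _) h4
    · exact h1 _ (hi _) _ (hi _) h4

theorem Hw_mem {n q : ℕ} {X : Finset (Fin n → ℤ)} {f0 f1 : (Fin n → ℤ) → (Fin n → ℤ)}
    (h0 : MapsInto X X f0) (h1 : MapsInto X X f1)
    {b : Fin n → ℤ} {e : Fin q → Fin n} (hi : ins X b e) (y) : Hw f0 f1 b e y ∈ X := by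
  unfold Hw
  split_ifs
  · exact h1 _ (hi _)
  · exact h0 _ (hi _)

theorem Hw_zero {n q : ℕ} (f0 f1 : (Fin n → ℤ) → (Fin n → ℤ)) (b : Fin n → ℤ) (e : Fin q → Fin n)
    (s : Bool) : (fun x => Hw f0 f1 b e (dl 0 s x)) = fun x => (if s then f1 else f0) (p0 b e x) := by
  funext x
  have : (fun k : Fin q => dl 0 s x k.succ) = x := by
    funext k; exact dl_above 0 s x k
  simp only [Hw, dl_same, this]

theorem p0_dl {n q : ℕ} (b : Fin n → ℤ) (e : Fin (q+1) → Fin n) (i : Fin (q+1)) (s : Bool) (x) :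
    p0 b e (dl i s x) = p0 (if s then b + Pi.single (e i) 1 else b) (e ∘ i.succAbove) x := by
  have := congrFun (pc_dl b e (fun _ => false) i s) x
  simpa [p0] using this

theorem Hw_succ {n q : ℕ} (f0 f1 : (Fin n → ℤ) → (Fin n → ℤ)) (b : Fin n → ℤ)
    (e : Fin (q+1) → Fin n) (k : Fin (q+1))
    (s : Bool) : (fun x => Hw f0 f1 b e (dl k.succ s x)) =
      Hw f0 f1 (if s then b + Pi.single (e k) 1 else b) (e ∘ k.succAbove) := by
  funext x
  have h1 : (fun l : Fin (q+1) => dl k.succ s x l.succ) = dl k s (fun l => x l.succ) := by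
    funext l
    rcases Fin.eq_self_or_eq_succAbove k l with rfl | ⟨l, rfl⟩
    · rw [dl_same, dl_same]
    · rw [dl_above, ← Fin.succ_succAbove_succ, dl_above]
  have h2 : dl k.succ s x 0 = x 0 := by
    have := dl_above k.succ s x 0
    rwa [Fin.succAbove_of_castSucc_lt _ _ (by simp)] at this
  simp only [Hw, h1, h2, p0_dl]

theorem ins_face {n q : ℕ} {X : Finset (Fin n → ℤ)} {b : Fin n → ℤ} {e : Fin (q+1) → Fin n}
    (h : ins X b e) (i : Fin (q+1)) (s : Bool) :
    ins X (if s then b + Pi.single (e i) 1 else b) (e ∘ i.succAbove) := by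
  intro x
  rw [← p0_dl]; exact h _

theorem sum_shift {n : ℕ} (X : Finset (Fin n → ℤ)) (φ : (Fin n → ℤ) → ℚ) (v : Fin n → ℤ)
    (h : ∀ b, φ b ≠ 0 → b ∈ X ∧ b - v ∈ X) : ∑ b ∈ X, φ b = ∑ b ∈ X, φ (b + v) := by
  refine Finset.sum_bij_ne_zero (fun b _ _ => b - v) ?_ ?_ ?_ ?_
  · intro b _ hb; exact (h b hb).2
  · intro a _ _ b _ _ hab; exact sub_left_injective hab
  · intro b hb hb2; exact ⟨b + v, (h _ hb2).1, hb2, by simp⟩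
  · intro b _ _; simp

def Bq {n : ℕ} (X : Finset (Fin n → ℤ)) (f0 f1 : (Fin n → ℤ) → (Fin n → ℤ)) (q : ℕ) : ℚ :=
  ∑ b ∈ X, ∑ e : Fin q → Fin n, if ins X b e then
    ∑ j : Fin n, (coef (Hw f0 f1 b e) (b - Pi.single j 1) (Fin.cons j e)
      - coef (Hw f0 f1 b e) b (Fin.cons j e)) else 0

def Qq {n q : ℕ} (f0 f1 : (Fin n → ℤ) → (Fin n → ℤ)) (b : Fin n → ℤ) (e : Fin (q+1) → Fin n)
    (k : Fin (q+1)) : ℚ :=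
  coef (Hw f0 f1 (b + Pi.single (e k) 1) (e ∘ k.succAbove)) b e
    - coef (Hw f0 f1 b (e ∘ k.succAbove)) b e

theorem Bq_eq {n : ℕ} {X : Finset (Fin n → ℤ)} {f0 f1 : (Fin n → ℤ) → (Fin n → ℤ)} (q : ℕ)
    (h0 : MapsInto X X f0) (h1 : MapsInto X X f1) :
    Bq X f0 f1 q = ∑ b ∈ X, ∑ e : Fin (q+1) → Fin n, if ins X b e then Qq f0 f1 b e 0 else 0 := by
  have hL : Bq X f0 f1 q = ∑ e : Fin q → Fin n, ∑ j : Fin n, ∑ b ∈ X,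
      ((if ins X b e then coef (Hw f0 f1 b e) (b - Pi.single j 1) (Fin.cons j e) else 0) -
      (if ins X b e then coef (Hw f0 f1 b e) b (Fin.cons j e) else 0)) := by
    unfold Bq
    rw [Finset.sum_comm]
    refine Finset.sum_congr rfl fun e _ => ?_
    rw [Finset.sum_comm]
    refine Finset.sum_congr rfl fun b _ => ?_
    by_cases h : ins X b e
    · simp only [if_pos h]
    · simp only [if_neg h]; simp
  have hR : (∑ b ∈ X, ∑ e : Fin (q+1) → Fin n, if ins X b e then Qq f0 f1 b e 0 else 0)
      = ∑ e : Fin q → Fin n, ∑ j : Fin n, ∑ b ∈ X, if ins X b (Fin.cons j e : Fin (q+1) → Fin n) then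
          coef (Hw f0 f1 (b + Pi.single j 1) e) b (Fin.cons j e)
            - coef (Hw f0 f1 b e) b (Fin.cons j e) else 0 := by
    rw [Finset.sum_comm]
    rw [← (Fin.consEquiv (fun _ : Fin (q+1) => Fin n)).sum_comp, Fintype.sum_prod_type, Finset.sum_comm]
    rfl
  rw [hL, hR]
  refine Finset.sum_congr rfl fun e _ => Finset.sum_congr rfl fun j _ => ?_
  rw [Finset.sum_sub_distrib, sum_shift X _ (Pi.single j 1), ← Finset.sum_sub_distrib]
  · refine Finset.sum_congr rfl fun b _ => ?_
    rw [add_sub_cancel_right]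
    by_cases h : ins X b (Fin.cons j e : Fin (q+1) → Fin n)
    · have a1 : ins X (b + Pi.single j 1) e := by
        have := ins_face h 0 true; simpa using this
      have a2 : ins X b e := by
        have := ins_face h 0 false; simpa using this
      rw [if_pos h, if_pos a1, if_pos a2]
    · rw [if_neg h]
      have z : ∀ b', (if ins X b' e then coef (Hw f0 f1 b' e) b (Fin.cons j e) else 0) = 0 := by
        intro b'
        split_ifs with h2
        · by_contra h3
          exact h (ins_of_coef h3 (Hw_mem h0 h1 h2))
        · rfl
      rw [z, z, sub_zero]
  · intro b hb
    split_ifs at hb with h2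
    · exact ⟨ins_mem h2, ins_mem (ins_of_coef hb (Hw_mem h0 h1 h2))⟩
    · exact absurd rfl hb

theorem Qq_perm {n q : ℕ} (f0 f1 : (Fin n → ℤ) → (Fin n → ℤ)) (b : Fin n → ℤ) (e : Fin (q+1) → Fin n)
    (k : Fin (q+1)) : Qq f0 f1 b (e ∘ k.cycleRange.symm) 0 = (-1)^(k:ℕ) * Qq f0 f1 b e k := by
  unfold Qq
  have h1 : (e ∘ k.cycleRange.symm) ∘ (Fin.succAbove 0) = e ∘ k.succAbove := by
    funext i; simp
  rw [h1, coef_comp_right, coef_comp_right]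
  have h2 : (e ∘ k.cycleRange.symm) 0 = e k := by simp
  rw [h2]
  simp
  ring

theorem C_eq {n : ℕ} {X : Finset (Fin n → ℤ)} {f0 f1 : (Fin n → ℤ) → (Fin n → ℤ)} (q : ℕ)
    (h0 : MapsInto X X f0) (h1 : MapsInto X X f1) :
    (∑ b ∈ X, ∑ e : Fin (q+1) → Fin n, if ins X b e then
      ∑ k : Fin (q+1), (-1)^(k:ℕ) * Qq f0 f1 b e k else 0) = (q+1) * Bq X f0 f1 q := by
  rw [Bq_eq q h0 h1, Finset.mul_sum]
  refine Finset.sum_congr rfl fun b _ => ?_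
  have : ∀ e : Fin (q+1) → Fin n, (if ins X b e then ∑ k : Fin (q+1), (-1)^(k:ℕ) * Qq f0 f1 b e k else 0)
     = ∑ k : Fin (q+1), if ins X b (e ∘ k.cycleRange.symm) then Qq f0 f1 b (e ∘ k.cycleRange.symm) 0 else 0 := by
    intro e
    simp only [ins_perm, Qq_perm]
    split_ifs <;> simp
  rw [Finset.sum_congr rfl fun e _ => this e, Finset.sum_comm]
  have h2 : ∀ k : Fin (q+1), (∑ e : Fin (q+1) → Fin n, if ins X b (e ∘ k.cycleRange.symm) then Qq f0 f1 b (e ∘ k.cycleRange.symm) 0 else 0)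
     = ∑ e : Fin (q+1) → Fin n, if ins X b e then Qq f0 f1 b e 0 else 0 := by
    intro k
    exact Equiv.sum_comp (Equiv.arrowCongr k.cycleRange (Equiv.refl (Fin n)))
      (fun e => if ins X b e then Qq f0 f1 b e 0 else 0)
  rw [Finset.sum_congr rfl fun k _ => h2 k]
  simp

theorem rec0 {n : ℕ} {X : Finset (Fin n → ℤ)} {f0 f1 : (Fin n → ℤ) → (Fin n → ℤ)}
    (s0 : StepOn X f0) (s1 : StepOn X f1) (hN : ∀ x ∈ X, Near (f0 x) (f1 x)) :
    Tq X f1 0 - Tq X f0 0 = Bq X f0 f1 0 := by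
  unfold Tq Bq
  rw [← Finset.sum_sub_distrib]
  refine Finset.sum_congr rfl fun b _ => ?_
  rw [← Finset.sum_sub_distrib]
  refine Finset.sum_congr rfl fun e _ => ?_
  by_cases hi : ins X b e
  · simp only [if_pos hi]
    rw [main_all 0 n _ (step_Hw s0 s1 hN hi) b e]
    unfold bd
    simp only [Fin.sum_univ_succ, Hw_zero]
    simp
  · simp only [if_neg hi, sub_zero]

theorem recS {n : ℕ} {X : Finset (Fin n → ℤ)} {f0 f1 : (Fin n → ℤ) → (Fin n → ℤ)} (q : ℕ)
    (h0 : MapsInto X X f0) (h1 : MapsInto X X f1)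
    (s0 : StepOn X f0) (s1 : StepOn X f1) (hN : ∀ x ∈ X, Near (f0 x) (f1 x)) :
    Tq X f1 (q+1) - Tq X f0 (q+1) = Bq X f0 f1 (q+1) + (q+1) * Bq X f0 f1 q := by
  rw [← C_eq q h0 h1]
  unfold Tq Bq
  rw [← Finset.sum_sub_distrib, ← Finset.sum_add_distrib]
  refine Finset.sum_congr rfl fun b _ => ?_
  rw [← Finset.sum_sub_distrib, ← Finset.sum_add_distrib]
  refine Finset.sum_congr rfl fun e _ => ?_
  by_cases hi : ins X b e
  · simp only [if_pos hi]
    rw [main_all (q+1) n _ (step_Hw s0 s1 hN hi) b e]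
    unfold bd
    rw [Fin.sum_univ_succ]
    simp only [Hw_zero, Hw_succ, Fin.val_succ, Qq, pow_succ]
    simp
  · simp only [if_neg hi, sub_zero, add_zero]

theorem Bq_zero {n : ℕ} {X : Finset (Fin n → ℤ)} {f0 f1 : (Fin n → ℤ) → (Fin n → ℤ)} {q : ℕ}
    (h : n ≤ q) : Bq X f0 f1 q = 0 := by
  have key : ∀ (w : V (q+1) → Fin n → ℤ) b e, coef w b e = 0 := by
    intro w b e
    by_contra h2
    have := Fintype.card_le_of_injective _ (coef_target_inj h2)
    simp at this
    omega
  unfold Bq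
  simp [key]

theorem TT_hom {n : ℕ} {X : Finset (Fin n → ℤ)} {f0 f1 : (Fin n → ℤ) → (Fin n → ℤ)} {N : ℕ}
    (hn : n < N)
    (h0 : MapsInto X X f0) (h1 : MapsInto X X f1)
    (s0 : StepOn X f0) (s1 : StepOn X f1) (hN : ∀ x ∈ X, Near (f0 x) (f1 x)) :
    TT N X f0 = TT N X f1 := by
  have key : ∀ N, TT (N+1) X f1 - TT (N+1) X f0 = (-1)^N / (N.factorial : ℚ) * Bq X f0 f1 N := by
    intro N
    induction N with
    | zero =>
      have := rec0 s0 s1 hN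
      simp [TT, this]
    | succ N ih =>
      have r := recS N h0 h1 s0 s1 hN
      have e : ∀ f, TT (N+1+1) X f = TT (N+1) X f + (-1)^(N+1) / ((N+1).factorial : ℚ) * Tq X f (N+1) := by
        intro f; unfold TT; rw [Finset.sum_range_succ]
      rw [e, e]
      have hf : (N.factorial : ℚ) ≠ 0 := by exact_mod_cast N.factorial_ne_zero
      have hN1 : ((N:ℚ)+1) ≠ 0 := by positivity
      have : (-1)^(N+1) / ((N+1).factorial : ℚ) * (((N:ℚ)+1) * Bq X f0 f1 N) = - ((-1)^N / (N.factorial : ℚ) * Bq X f0 f1 N) := by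
        rw [Nat.factorial_succ]; push_cast; field_simp; ring
      linear_combination ih + (-1)^(N+1) / ((N+1).factorial : ℚ) * r + this
  obtain ⟨M, rfl⟩ : ∃ M, N = M + 1 := ⟨N - 1, by omega⟩
  have := key M
  rw [Bq_zero (by omega)] at this
  linarith

end CL

namespace CL

theorem cubeSign_eq {n : ℕ} (f : (Fin n → ℤ) → (Fin n → ℤ)) (a : Fin n → ℤ) (D : Finset (Fin n))
    (p : Equiv.Perm {i // i ∈ D} × ({i // i ∈ D} → ℤ))
    (hp : (∀ i, p.2 i = 1 ∨ p.2 i = -1) ∧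
      ∀ x ∈ eCube a D, ∀ i : {i // i ∈ D},
        f x (i : Fin n) = f a (i : Fin n) + p.2 i * (x ((p.1 i : Fin n)) - a ((p.1 i : Fin n)))) :
    cubeSign f a D = ((Equiv.Perm.sign p.1 : ℤˣ) : ℤ) * ∏ i, p.2 i := by
  have hex : ∃ p : Equiv.Perm {i // i ∈ D} × ({i // i ∈ D} → ℤ),
    (∀ i, p.2 i = 1 ∨ p.2 i = -1) ∧
      ∀ x ∈ eCube a D, ∀ i : {i // i ∈ D},
        f x (i : Fin n) = f a (i : Fin n) + p.2 i * (x ((p.1 i : Fin n)) - a ((p.1 i : Fin n))) := ⟨p, hp⟩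
  unfold cubeSign
  rw [dif_pos hex]
  have key : hex.choose = p := by
    have hp' := hex.choose_spec
    generalize hex.choose = p' at hp'
    have hh : ∀ i, p'.1 i = p.1 i ∧ p'.2 i = p.2 i := by
      intro i
      have hx : (fun k => a k + if k ∈ ({(p.1 i : Fin n)} : Finset (Fin n)) then 1 else 0) ∈ eCube a D := by
        unfold eCube
        rw [Finset.mem_image]
        exact ⟨{(p.1 i : Fin n)}, by simp, rfl⟩
      have e1 := hp.2 _ hx i
      have e2 := hp'.2 _ hx i
      rw [e1] at e2
      simp only [Finset.mem_singleton, add_sub_cancel_left, if_true, mul_one] at e2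
      have e3 := add_left_cancel e2
      by_cases hc : p'.1 i = p.1 i
      · refine ⟨hc, ?_⟩
        rw [hc] at e3; simpa using e3.symm
      · have hc' : ¬ ((p'.1 i : Fin n) = p.1 i) := fun h => hc (Subtype.ext h)
        rw [if_neg hc', mul_zero] at e3
        rcases hp.1 i with h | h <;> rw [h] at e3 <;> omega
    exact Prod.ext (Equiv.ext fun i => (hh i).1) (funext fun i => (hh i).2)
  rw [key]

theorem pc_val {n q : ℕ} (b : Fin n → ℤ) {e : Fin q → Fin n} (he : Function.Injective e) (r x : V q)
    (i : Fin q) : pc b e r x (e i) = b (e i) + if xor (x i) (r i) then 1 else 0 := by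
  rw [pc_apply]
  congr 1
  rw [Finset.sum_eq_single i]
  · simp
  · intro j _ hj
    rw [if_neg]
    rintro ⟨-, h⟩
    exact hj (he h)
  · simp

theorem pc_val_not {n q : ℕ} (b : Fin n → ℤ) (e : Fin q → Fin n) (r x : V q)
    (k : Fin n) (hk : ∀ i, e i ≠ k) : pc b e r x k = b k := by
  rw [pc_apply]
  simp [hk]

theorem eCube_p0 {n q : ℕ} (b : Fin n → ℤ) {e : Fin q → Fin n} (he : Function.Injective e) :
    eCube b (Finset.univ.image e) = Finset.univ.image (p0 b e) := by
  have key : ∀ (s : Finset (Fin n)), s ⊆ Finset.univ.image e → (fun k => b k + if k ∈ s then 1 else 0) =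
      p0 b e (fun i => decide (e i ∈ s)) := by
    intro s hs
    funext k
    by_cases hk : ∃ i, e i = k
    · obtain ⟨i, rfl⟩ := hk
      rw [p0, pc_val b he]; simp
    · push Not at hk
      rw [p0, pc_val_not b e _ _ k hk]
      rw [if_neg, add_zero]
      intro h
      have := hs h
      simp at this
      obtain ⟨i, hi⟩ := this
      exact hk i hi
  ext y
  unfold eCube
  simp only [Finset.mem_image, Finset.mem_powerset, Finset.mem_univ, true_and]
  constructor
  · rintro ⟨s, hs, rfl⟩
    exact ⟨_, (key s hs).symm⟩
  · rintro ⟨x, rfl⟩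
    have hs : (Finset.univ.filter (fun i => x i = true)).image e ⊆ Finset.univ.image e :=
      Finset.image_subset_image (Finset.filter_subset _ _)
    refine ⟨_, hs, ?_⟩
    rw [key _ hs]
    congr 1
    funext i
    rw [Bool.eq_iff_iff]
    simp [he.eq_iff]

theorem range_pc {n q : ℕ} (b : Fin n → ℤ) (e : Fin q → Fin n) (r : V q) :
    Finset.univ.image (pc b e r) = Finset.univ.image (p0 b e) := by
  ext y
  simp only [Finset.mem_image, Finset.mem_univ, true_and]
  constructor
  · rintro ⟨x, rfl⟩; exact ⟨_, (pc_p0 b e r x).symm⟩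
  · rintro ⟨x, rfl⟩
    refine ⟨fun i => xor (x i) (r i), ?_⟩
    rw [pc_p0]; simp [Bool.xor_assoc]

theorem range_perm {n q : ℕ} (b : Fin n → ℤ) (e : Fin q → Fin n) (π : Equiv.Perm (Fin q)) :
    Finset.univ.image (p0 b (e ∘ π)) = Finset.univ.image (p0 b e) := by
  ext y
  simp only [Finset.mem_image, Finset.mem_univ, true_and]
  constructor
  · rintro ⟨x, rfl⟩
    have := p0_perm' b e x π.symm
    rw [Equiv.symm_symm] at this
    exact ⟨_, this.symm⟩
  · rintro ⟨x, rfl⟩; exact ⟨_, p0_perm b e x π⟩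

theorem range_inj {n q : ℕ} {b b' : Fin n → ℤ} {e e' : Fin q → Fin n} (he : Function.Injective e)
    (he' : Function.Injective e')
    (h : Finset.univ.image (p0 b e) = Finset.univ.image (p0 b' e')) :
    b = b' ∧ ∃ π : Equiv.Perm (Fin q), e = e' ∘ π := by
  have aux : ∀ {b b' : Fin n → ℤ} {e e' : Fin q → Fin n},
      Finset.univ.image (p0 b e) = Finset.univ.image (p0 b' e') → ∀ x, ∃ y, p0 b e x = p0 b' e' y := by
    intro b b' e e' h x
    have : p0 b e x ∈ Finset.univ.image (p0 b e) := Finset.mem_image_of_mem _ (Finset.mem_univ _)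
    rw [h] at this
    obtain ⟨y, _, hy⟩ := Finset.mem_image.1 this
    exact ⟨y, hy.symm⟩
  have hle : ∀ {b b' : Fin n → ℤ} {e e' : Fin q → Fin n},
      Finset.univ.image (p0 b e) = Finset.univ.image (p0 b' e') → b' ≤ b := by
    intro b b' e e' h
    obtain ⟨y, hy⟩ := aux h (fun _ => false)
    rw [p0, pc_self] at hy
    intro k
    rw [hy]; exact pc_ge _ _ _ _ _
  have hb : b = b' := le_antisymm (hle h.symm) (hle h)
  subst hb
  refine ⟨rfl, ?_⟩
  have h3 : ∀ i, ∃ j, e' j = e i := by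
    intro i
    obtain ⟨y, hy⟩ := aux h (fun j => decide (j = i))
    by_contra hc
    push Not at hc
    have h1 := congrFun hy (e i)
    rw [p0, p0, pc_val b he, pc_val_not b e' _ _ _ hc] at h1
    simp at h1
  choose g hg using h3
  have hgi : Function.Injective g := by
    intro i j hij
    apply he
    rw [← hg, ← hg, hij]
  refine ⟨Equiv.ofBijective g (Finite.injective_iff_bijective.1 hgi), ?_⟩
  funext i
  exact (hg i).symm

theorem AA_self {n q : ℕ} {e : Fin q → Fin n} (he : Function.Injective e) : AA e e = 1 := by
  unfold AA
  have : (Matrix.of fun k i => if e k = e i then (1:ℚ) else 0) = 1 := by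
    ext k i
    simp [Matrix.one_apply, he.eq_iff]
  rw [this, Matrix.det_one]

theorem coef_cube {n q : ℕ} {X : Finset (Fin n → ℤ)} {f : (Fin n → ℤ) → (Fin n → ℤ)}
    (hf : StepOn X f) (b : Fin n → ℤ) {e : Fin q → Fin n} (he : Function.Injective e)
    (hi : ins X b e) :
    coef (fun x => f (p0 b e x)) b e =
      if (eCube b (Finset.univ.image e)).image f = eCube b (Finset.univ.image e) then
        (cubeSign f b (Finset.univ.image e) : ℚ) else 0 := by
  have him : (eCube b (Finset.univ.image e)).image f = Finset.univ.image (fun x => f (p0 b e x)) := by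
    rw [eCube_p0 b he, Finset.image_image]; rfl
  split_ifs with h
  · rw [him, eCube_p0 b he] at h
    have hinj : Function.Injective (fun x => f (p0 b e x)) := by
      have hc : (Finset.univ.image (fun x => f (p0 b e x))).card = (Finset.univ : Finset (V q)).card := by
        rw [h]
        exact Finset.card_image_of_injective _ (pc_inj b he _)
      have := Finset.card_image_iff.1 hc
      exact fun x y hxy => this (by simp) (by simp) hxy
    obtain ⟨b', e', r, he', hw⟩ := structure_pc _ (step_comp hf (step_p0 b e) hi) hinj
    rw [hw, range_pc] at h
    obtain ⟨rfl, π, rfl⟩ := range_inj he' he h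
    rw [hw, coef_pc, if_pos rfl, AA_comp_left, AA_self he, mul_one]
    let E : Fin q ≃ {i // i ∈ Finset.univ.image e} := Equiv.ofBijective
      (fun k => ⟨e k, Finset.mem_image_of_mem _ (Finset.mem_univ _)⟩) (by
        constructor
        · intro i j hij
          exact he (congrArg Subtype.val hij)
        · rintro ⟨k, hk⟩
          obtain ⟨i, _, rfl⟩ := Finset.mem_image.1 hk
          exact ⟨i, rfl⟩)
    have hE : ∀ k, ((E k : {i // i ∈ Finset.univ.image e}) : Fin n) = e k := fun k => rfl
    have hfw : ∀ x i, f (p0 b' e x) (e (π i)) = b' (e (π i)) + if xor (x i) (r i) then 1 else 0 := by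
      intro x i
      have h1 := congrFun (congrFun hw x) (e (π i))
      rw [h1]
      exact pc_val b' he' r x i
    rw [cubeSign_eq f b' _ (E.permCongr π.symm, fun k => if r (π.symm (E.symm k)) then -1 else 1)]
    · rw [Equiv.Perm.sign_permCongr, Equiv.Perm.sign_symm]
      rw [← E.prod_comp, ← Equiv.prod_comp π]
      simp only [Equiv.symm_apply_apply]
      unfold sg
      push_cast
      rw [mul_comm]
    · constructor
      · intro i; dsimp only; split_ifs <;> simp
      · intro x hx i
        obtain ⟨k, rfl⟩ := E.surjective i
        obtain ⟨j, rfl⟩ := π.surjective k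
        rw [eCube_p0 b' he] at hx
        obtain ⟨y, _, rfl⟩ := Finset.mem_image.1 hx
        have hb : f b' (e (π j)) = b' (e (π j)) + if r j then 1 else 0 := by
          have := hfw (fun _ => false) j
          rw [p0, pc_self] at this
          simpa using this
        simp only [Equiv.permCongr_apply, Equiv.symm_apply_apply, hE, hfw, hb]
        rw [p0, pc_val b' he]
        cases y j <;> cases r j <;> simp
  · by_contra h2
    obtain ⟨e2, r, hw, hA⟩ := coef_form h2
    obtain ⟨π, rfl⟩ := AA_perm hA
    apply h
    rw [him, hw, range_pc, range_perm, eCube_p0 b he]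

theorem count {n q : ℕ} (D : Finset (Fin n)) :
    (Finset.univ.filter (fun e : Fin q → Fin n => Function.Injective e ∧ Finset.univ.image e = D)).card
      = if D.card = q then q.factorial else 0 := by
  split_ifs with h
  · have : Fintype.card (Fin q ↪ {i // i ∈ D}) = q.factorial := by
      rw [Fintype.card_embedding_eq]
      simp [h, Nat.descFactorial_self]
    rw [← this, ← Finset.card_univ]
    symm
    refine Finset.card_bij (fun g _ => fun k => (g k : Fin n)) ?_ ?_ ?_
    · intro g _
      have hi : Function.Injective (fun k => (g k : Fin n)) :=
        fun i j hij => g.injective (Subtype.ext hij)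
      simp only [Finset.mem_filter, Finset.mem_univ, true_and]
      refine ⟨hi, ?_⟩
      apply Finset.eq_of_subset_of_card_le
      · intro k hk
        obtain ⟨i, _, rfl⟩ := Finset.mem_image.1 hk
        exact (g i).2
      · rw [Finset.card_image_of_injective _ hi, h]; simp
    · intro g _ g' _ hgg
      ext k
      exact congrArg Fin.val (congrFun hgg k)
    · intro e he
      simp only [Finset.mem_filter, Finset.mem_univ, true_and] at he
      obtain ⟨h1, h2⟩ := he
      refine ⟨⟨fun k => ⟨e k, h2 ▸ Finset.mem_image_of_mem _ (Finset.mem_univ _)⟩, ?_⟩,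
        Finset.mem_univ _, rfl⟩
      intro i j hij
      exact h1 (congrArg Subtype.val hij)
  · rw [Finset.card_eq_zero, Finset.filter_eq_empty_iff]
    rintro e - ⟨h1, h2⟩
    apply h
    rw [← h2, Finset.card_image_of_injective _ h1]; simp

open Classical in
theorem sum_inj {n q : ℕ} (ψ : Finset (Fin n) → ℚ) :
    (∑ e : Fin q → Fin n, if Function.Injective e then ψ (Finset.univ.image e) else 0) =
      ∑ D : Finset (Fin n), if D.card = q then (q.factorial : ℚ) * ψ D else 0 := by
  have h1 : ∀ e : Fin q → Fin n, (if Function.Injective e then ψ (Finset.univ.image e) else 0) =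
     ∑ D : Finset (Fin n), if Function.Injective e ∧ Finset.univ.image e = D then ψ D else 0 := by
    intro e
    by_cases h : Function.Injective e
    · simp [h]
    · simp [h]
  rw [Finset.sum_congr rfl fun e _ => h1 e, Finset.sum_comm]
  refine Finset.sum_congr rfl fun D _ => ?_
  rw [← Finset.sum_filter, Finset.sum_const, nsmul_eq_mul]
  have := count (q := q) D
  have h2 : (Finset.univ.filter (fun e : Fin q → Fin n => Function.Injective e ∧ Finset.univ.image e = D)).card
      = if D.card = q then q.factorial else 0 := by
    rw [← this]
  rw [h2]
  split_ifs <;> simp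

open Classical in
theorem cubLef_eq {n N : ℕ} (hN : n < N) {X : Finset (Fin n → ℤ)} {f : (Fin n → ℤ) → (Fin n → ℤ)}
    (hf : StepOn X f) : (cubLef X f : ℚ) = TT N X f := by
  let ψ : (Fin n → ℤ) → Finset (Fin n) → ℚ := fun b D =>
    if eCube b D ⊆ X ∧ (eCube b D).image f = eCube b D then (cubeSign f b D : ℚ) else 0
  have hT : ∀ q, Tq X f q = ∑ b ∈ X, ∑ D : Finset (Fin n), if D.card = q then (q.factorial : ℚ) * ψ b D else 0 := by
    intro q
    unfold Tq
    refine Finset.sum_congr rfl fun b _ => ?_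
    rw [← sum_inj]
    refine Finset.sum_congr rfl fun e _ => ?_
    by_cases he : Function.Injective e
    · rw [if_pos he]
      have hs : ins X b e ↔ eCube b (Finset.univ.image e) ⊆ X := by
        rw [eCube_p0 b he, Finset.image_subset_iff]
        simp [ins]
      by_cases hi : ins X b e
      · rw [if_pos hi, coef_cube hf b he hi]
        simp only [ψ, hs.1 hi, true_and]
      · rw [if_neg hi]
        simp only [ψ]
        rw [if_neg]
        exact fun h => hi (hs.2 h.1)
    · rw [if_neg he]
      split_ifs
      · by_contra h
        exact he (coef_target_inj h)
      · rfl
  have hq : ∀ q : ℕ, (q.factorial : ℚ) ≠ 0 := fun q => by exact_mod_cast q.factorial_ne_zero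
  unfold TT cubLef
  simp only [hT, Finset.mul_sum]
  push_cast
  symm
  rw [Finset.sum_comm]
  refine Finset.sum_congr rfl fun b _ => ?_
  rw [Finset.sum_comm]
  refine Finset.sum_congr rfl fun D _ => ?_
  rw [Finset.sum_eq_single D.card]
  · rw [if_pos rfl]
    simp only [ψ]
    have := hq D.card
    split_ifs
    · field_simp
    · simp
  · intro q _ hne
    rw [if_neg (Ne.symm hne), mul_zero]
  · intro h
    exfalso
    apply h
    rw [Finset.mem_range]
    have := Finset.card_le_univ D
    simp at this
    omega

end CL

namespace CL

theorem near_iff {n : ℕ} (x y : Fin n → ℤ) : Near x y ↔ x = y ∨ c1Adj x y := by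
  unfold Near c1Adj
  have h0 : 0 ≤ ∑ i, |x i - y i| := Finset.sum_nonneg fun i _ => abs_nonneg _
  have h1 : (∑ i, |x i - y i|) = 0 ↔ x = y := by
    rw [Finset.sum_eq_zero_iff_of_nonneg (fun i _ => abs_nonneg _)]
    simp [sub_eq_zero, funext_iff]
  rw [← h1]
  omega

theorem stepOn_iff {n m : ℕ} (X : Finset (Fin n → ℤ)) (f : (Fin n → ℤ) → (Fin m → ℤ)) :
    c1Cont X f ↔ StepOn X f := by
  unfold c1Cont StepOn
  simp only [near_iff]
  constructor
  · intro h x hx y hy hxy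
    rcases hxy with rfl | hxy
    · exact Or.inl rfl
    · exact h x hx y hy hxy
  · intro h x hx y hy hxy
    exact h x hx y hy (Or.inr hxy)

theorem TT_homotopic {n N : ℕ} (hN : n < N) {X : Finset (Fin n → ℤ)}
    {f k : (Fin n → ℤ) → (Fin n → ℤ)} (hf : MapsInto X X f) (sf : StepOn X f)
    (hk : c1Homotopic X X k id) : TT N X (f ∘ k) = TT N X f := by
  obtain ⟨K, H, hX, h0, h1, hs, hc⟩ := hk
  have sH : ∀ t ≤ K, StepOn X (fun x => H x t) := fun t ht => (stepOn_iff _ _).1 (hc t ht)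
  have key : ∀ t ≤ K, TT N X (fun x => f (H x 0)) = TT N X (fun x => f (H x t)) := by
    intro t
    induction t with
    | zero => intro _; rfl
    | succ t ih =>
      intro ht
      rw [ih (by omega)]
      apply TT_hom hN
      · exact fun x hx => hf _ (hX x hx t (by omega))
      · exact fun x hx => hf _ (hX x hx (t+1) ht)
      · exact fun x hx y hy hxy => sf _ (hX x hx t (by omega)) _ (hX y hy t (by omega))
          (sH t (by omega) x hx y hy hxy)
      · exact fun x hx y hy hxy => sf _ (hX x hx _ ht) _ (hX y hy _ ht) (sH _ ht x hx y hy hxy)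
      · exact fun x hx => sf _ (hX x hx t (by omega)) _ (hX x hx _ ht)
          ((near_iff _ _).2 (hs x hx t ht))
  have e1 : TT N X (f ∘ k) = TT N X (fun x => f (H x 0)) :=
    TT_congr N fun x hx => by rw [h0 x hx]; rfl
  have e2 : TT N X f = TT N X (fun x => f (H x K)) :=
    TT_congr N fun x hx => by rw [h1 x hx]; rfl
  rw [e1, e2, key K le_rfl]

theorem half {n m : ℕ} {X : Finset (Fin n → ℤ)} {Y : Finset (Fin m → ℤ)}
    {g : (Fin n → ℤ) → (Fin m → ℤ)} {h : (Fin m → ℤ) → (Fin n → ℤ)}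
    (hgXY : MapsInto X Y g) (hhYX : MapsInto Y X h)
    (hg : c1Cont X g) (hh : c1Cont Y h)
    (hhg : c1Homotopic X X (h ∘ g) id) (f : (Fin n → ℤ) → (Fin n → ℤ))
    (hf : MapsInto X X f) (sf : c1Cont X f) :
    ∃ f' : (Fin m → ℤ) → (Fin m → ℤ), MapsInto Y Y f' ∧ c1Cont Y f' ∧ cubLef Y f' = cubLef X f := by
  rw [stepOn_iff] at hg hh sf
  have s1 : StepOn Y (f ∘ h) := fun x hx y hy hxy =>
    sf _ (hhYX x hx) _ (hhYX y hy) (hh x hx y hy hxy)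
  have m1 : MapsInto Y X (f ∘ h) := fun x hx => hf _ (hhYX x hx)
  have s2 : StepOn Y (g ∘ (f ∘ h)) := fun x hx y hy hxy =>
    hg _ (m1 x hx) _ (m1 y hy) (s1 x hx y hy hxy)
  refine ⟨g ∘ (f ∘ h), fun x hx => hgXY _ (m1 x hx), (stepOn_iff _ _).2 s2, ?_⟩
  have e : (cubLef Y (g ∘ (f ∘ h)) : ℚ) = (cubLef X f : ℚ) := by
    rw [cubLef_eq (N := n + m + 1) (by omega) s2, cubLef_eq (N := n + m + 1) (by omega) sf,
      TT_cyc _ hgXY m1 hg s1]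
    exact TT_homotopic (by omega) hf sf hhg
  exact_mod_cast e

end CL

/-- Let `X ⊆ ℤ^n` and `Y ⊆ ℤ^m` (`n, m ≤ 3`) be finite digital images with
`c1`-adjacency that are homotopy equivalent: there are `c1`-continuous maps `g : X → Y`
and `h : Y → X` with `h ∘ g ≃ id_X` and `g ∘ h ≃ id_Y`. Then the cubical Lefschetz
spectra of `X` and `Y` coincide. -/
theorem cubLef_spectrum_homotopy_invariant {n m : ℕ} (hn : n ≤ 3) (hm : m ≤ 3)
    (X : Finset (Fin n → ℤ)) (Y : Finset (Fin m → ℤ))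
    (g : (Fin n → ℤ) → (Fin m → ℤ)) (h : (Fin m → ℤ) → (Fin n → ℤ))
    (hgXY : MapsInto X Y g) (hhYX : MapsInto Y X h)
    (hg : c1Cont X g) (hh : c1Cont Y h)
    (hhg : c1Homotopic X X (h ∘ g) id) (hgh : c1Homotopic Y Y (g ∘ h) id) :
    {z : ℤ | ∃ f : (Fin n → ℤ) → (Fin n → ℤ),
        MapsInto X X f ∧ c1Cont X f ∧ cubLef X f = z} =
      {z : ℤ | ∃ f' : (Fin m → ℤ) → (Fin m → ℤ),
        MapsInto Y Y f' ∧ c1Cont Y f' ∧ cubLef Y f' = z} := by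
  ext z
  constructor
  · rintro ⟨f, hf, sf, rfl⟩
    exact CL.half hgXY hhYX hg hh hhg f hf sf
  · rintro ⟨f, hf, sf, rfl⟩
    exact CL.half hhYX hgXY hh hg hgh f hf sf
end
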